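/- For every N ≥ 1 and every n ∈ ℕ, the following are equivalent: (1) there exists an ℝ-linear map B : ℝⁿ → M(N,ℂ) with B(v)ᴴ B(v) = ‖v‖² I_N for all v ∈ ℝⁿ; (2) there exists an ℝ-linear map B : ℝⁿ → M(N,ℂ) with B(v) invertible for every nonzero v; (3) n ≤ 2·ord₂(N) + 2. (Entry 𝔤 = 𝔰𝔲(N,N) of the Hurwitz–Radon value theorem, via the 𝔭-part consisting of block matrices [[0,B],[Bᴴ,0]]; it recovers the Adams–Lax–Phillips number ℂ(N).) -/

import Mathlib

open Matrix

/-!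
A real-linear family `B` of invertible matrices on `ℂᵐ × ℝ` restricts on `ℂᵐ` to an elliptic symbol
`S z = ∑ j, (z_j a_j + z̄_j b_j)`. Replacing `z_j` by the creation and `z̄_j` by the annihilation
operator, and damping by a power of the number operator, quantises `S` to a bounded operator on the
Fock space `ℓ²(ℕᵐ; ℂᴺ)`. Averaging `‖S z (f z)‖²` over a Gaussian measure, for polynomials `f`,
shows that ellipticity makes this operator Fredholm. It exchanges even and odd degrees, and the
index of its part from even to odd degrees is an additive homotopy invariant `ind S`.

The real direction of `B` gives perturbations by which the operator loses its kernel and cokernel.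
Hence its total index `ind S - ind Sᴴ` vanishes. On the other hand, let `D` be the Clifford symbol
on `Λ = ⋀ ℂᵐ`. The symbols `S ⊗ 1 ⊕ -Sᴴ ⊗ 1` and `[[0, 1 ⊗ D], [1 ⊗ D, 0]]` on two copies of
`ℂᴺ ⊗ Λ` are orthogonal at each `z`, so a rotation joins them through elliptic symbols. The second
has index `2N`, since the kernel of the quantisation of `D` is spanned by the vacuum. Therefore
`2ᵐ (ind S + ind Sᴴ) = 2N`, and `2ᵐ` divides `N`.

Conversely, for `N = 2ᵐ` the Clifford symbol `D`, the grading of `Λ` and the scalar `i` make up an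
isometric family of real dimension `2m + 2`.
-/

namespace HurwitzRadon

section Fredholm

open ContinuousLinearMap Module Topology

section Banach

variable {𝕜 X Y : Type*} [NontriviallyNormedField 𝕜] [NormedAddCommGroup X] [NormedSpace 𝕜 X]
  [NormedAddCommGroup Y] [NormedSpace 𝕜 Y]

theorem index_eq_of_isInvertible_proj_comp (dX : FredholmDecomposition 𝕜 X)
    (dY : FredholmDecomposition 𝕜 Y) {S : X →L[𝕜] Y} (hS : IsFredholm S)
    (hinv : (dY.proj ∘L S ∘L dX.X₁.subtypeL).IsInvertible) :
    S.toLinearMap.index = finrank 𝕜 dX.X₀ - finrank 𝕜 dY.X₀ := by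
  have := dX.finite_X₀
  have := dY.finite_X₀
  have := hS.finite_ker
  have : FiniteDimensional 𝕜 (Y ⧸ S.range) := hS.finite_coker
  let quotientEquiv := dX.X₁.quotientEquivOfIsCompl _ dX.isTopCompl.isCompl
  let π := dY.proj.toLinearMap
  have hπ_ker : π.ker = dY.X₀ := Submodule.ker_projectionOntoL _
  have hπ_surj : Function.Surjective π := fun y => ⟨y, by simp [π]⟩
  have : FiniteDimensional 𝕜 π.ker := by rwa [hπ_ker]
  have : FiniteDimensional 𝕜 (dY.X₁ ⧸ π.range) := by
    rw [LinearMap.range_eq_top.2 hπ_surj]; infer_instance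
  have : FiniteDimensional 𝕜 dX.X₁.subtype.ker := by rw [dX.X₁.ker_subtype]; infer_instance
  have : FiniteDimensional 𝕜 (X ⧸ dX.X₁.subtype.range) := by
    rw [dX.X₁.range_subtype]
    exact quotientEquiv.symm.finiteDimensional
  have : FiniteDimensional 𝕜 (dY.X₁ ⧸ (π ∘ₗ S.toLinearMap).range) := by
    rw [LinearMap.range_comp]; infer_instance
  have : FiniteDimensional 𝕜 (π ∘ₗ S.toLinearMap).ker := by
    rw [LinearMap.ker_comp]; infer_instance
  obtain ⟨e, he⟩ := hinv
  have hzero : (π ∘ₗ S.toLinearMap ∘ₗ dX.X₁.subtype).index = 0 := by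
    rw [show π ∘ₗ S.toLinearMap ∘ₗ dX.X₁.subtype = e.toLinearEquiv from
      congrArg ContinuousLinearMap.toLinearMap he.symm]
    exact LinearEquiv.index_eq_zero
  rw [← LinearMap.comp_assoc, LinearMap.index_comp, LinearMap.index_comp,
    LinearMap.index_of_injective dX.X₁.injective_subtype, LinearMap.index_of_surjective hπ_surj,
    hπ_ker, dX.X₁.range_subtype, quotientEquiv.finrank_eq] at hzero
  lia

theorem eventually_index_eq_of_isFredholm [CompleteSpace 𝕜] [CompleteSpace X] {S₀ : X →L[𝕜] Y}
    (hS₀ : IsFredholm S₀) :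
    ∀ᶠ S in 𝓝 S₀, IsFredholm S → S.toLinearMap.index = S₀.toLinearMap.index := by
  obtain ⟨pkg⟩ := hS₀.nonempty_fredholmPackage
  have : CompleteSpace pkg.decDom.X₁ := pkg.decDom.isTopCompl.isClosed.completeSpace_coe
  let compression (S : X →L[𝕜] Y) := pkg.decCodom.proj ∘L S ∘L pkg.decDom.X₁.subtypeL
  have hS₀_inv : compression S₀ = pkg.equiv := by
    ext x
    simp only [compression, pkg.eq_equiv]
    simp
  have hcont : Continuous compression := by fun_prop
  filter_upwards [hcont.continuousAt (hS₀_inv ▸ pkg.equiv.nhds)] with S hS_inv hS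
  rw [index_eq_of_isInvertible_proj_comp _ _ hS hS_inv,
    index_eq_of_isInvertible_proj_comp _ _ hS₀ ⟨_, hS₀_inv.symm⟩]

theorem index_eq_of_isFredholm_of_continuous [CompleteSpace 𝕜] [CompleteSpace X]
    {Θ : Type*} [TopologicalSpace Θ] [PreconnectedSpace Θ] {S : Θ → X →L[𝕜] Y}
    (hS : Continuous S) (hF : ∀ t, IsFredholm (S t)) (s t : Θ) :
    (S s).toLinearMap.index = (S t).toLinearMap.index := by
  have hlocal : IsLocallyConstant fun t => (S t).toLinearMap.index :=
    (IsLocallyConstant.iff_eventually_eq _).2 fun t =>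
      (hS.continuousAt.eventually (eventually_index_eq_of_isFredholm (hF t))).mono
        fun s hs => hs (hF s)
  exact hlocal.apply_eq_of_preconnectedSpace s t

end Banach

section Hilbert

variable {𝕜 X Y : Type*} [RCLike 𝕜] [NormedAddCommGroup X] [InnerProductSpace 𝕜 X]
  [NormedAddCommGroup Y] [InnerProductSpace 𝕜 Y]

/-- Upper semi-Fredholm operators, encoded by a lower bound on a closed subspace of finite
codimension; this is the form in which elliptic estimates provide them. -/
def IsUpperSemiFredholm (S : X →L[𝕜] Y) : Prop :=
  ∃ A : Submodule 𝕜 X, IsClosed (A : Set X) ∧ A.CoFG ∧ ∃ c > 0, ∀ x ∈ A, c * ‖x‖ ≤ ‖S x‖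

theorem IsUpperSemiFredholm.finiteDimensional_ker {S : X →L[𝕜] Y} (hS : IsUpperSemiFredholm S) :
    FiniteDimensional 𝕜 S.ker := by
  obtain ⟨A, -, hA, c, hc, hbound⟩ := hS
  have hdisj : Disjoint S.ker A := Submodule.disjoint_def.2 fun x hx hxA => by
    have := hbound x hxA
    rw [show S x = 0 from hx, norm_zero] at this
    exact norm_le_zero_iff.1 (nonpos_of_mul_nonpos_right this hc)
  exact Submodule.fg_iff_finiteDimensional _ |>.1 (hA.fg_of_disjoint hdisj)

theorem IsUpperSemiFredholm.isStrictMap_and_isClosed_range [CompleteSpace X] {S : X →L[𝕜] Y}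
    (hS : IsUpperSemiFredholm S) : IsStrictMap S ∧ IsClosed (S.range : Set Y) := by
  obtain ⟨A, hA_closed, hA, c, hc, hbound⟩ := hS
  have : CompleteSpace A := hA_closed.completeSpace_coe
  have hanti : AntilipschitzWith c⁻¹.toNNReal (S.domRestrict A) :=
    antilipschitz_of_bound _ fun x => by
      rw [Real.coe_toNNReal _ (inv_nonneg.2 hc.le), le_inv_mul_iff₀ hc]
      exact hbound x x.2
  have hembed := hanti.isClosedEmbedding (S.domRestrict A).uniformContinuous
  rw [S.isStrictMap_isClosed_range_iff_restrict A hA_closed]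
  exact ⟨hembed.isEmbedding.isStrictMap, hembed.isClosed_range⟩

variable [CompleteSpace X] [CompleteSpace Y]

theorem IsUpperSemiFredholm.isFredholm {S : X →L[𝕜] Y} (hS : IsUpperSemiFredholm S)
    (hS' : IsUpperSemiFredholm (adjoint S)) : IsFredholm S := by
  have hrange := hS.isStrictMap_and_isClosed_range
  have := hS.finiteDimensional_ker
  have hcoker := hS'.finiteDimensional_ker
  have : CompleteSpace S.range := hrange.2.completeSpace_coe
  refine ⟨hrange.1, hrange.2, hS.finiteDimensional_ker, ?_, .of_finiteDimensional _⟩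
  rw [← S.orthogonal_range] at hcoker
  exact S.range.quotientEquivOrthogonal.toLinearEquiv.symm.finiteDimensional

theorem index_eq_finrank_ker_sub_finrank_ker_adjoint {S : X →L[𝕜] Y}
    (hS : IsClosed (S.range : Set Y)) :
    S.toLinearMap.index = finrank 𝕜 S.ker - finrank 𝕜 (adjoint S).ker := by
  have : CompleteSpace S.range := hS.completeSpace_coe
  rw [LinearMap.index_eq_finrank_sub, ← S.orthogonal_range,
    S.range.quotientEquivOrthogonal.toLinearEquiv.finrank_eq]

end Hilbert

section Graded

variable {𝕜 H : Type*} [RCLike 𝕜] [NormedAddCommGroup H] [InnerProductSpace 𝕜 H]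

/-- `T` is odd for the `ℤ/2`-grading `H = E ⊕ Eᗮ`: it exchanges the two summands. -/
def IsOdd (E : Submodule 𝕜 H) (T : H →L[𝕜] H) : Prop :=
  (∀ x ∈ E, T x ∈ Eᗮ) ∧ ∀ x ∈ Eᗮ, T x ∈ E

/-- The component `E → F` of an operator. -/
noncomputable def compress (E F : Submodule 𝕜 H) [F.HasOrthogonalProjection] (T : H →L[𝕜] H) :
    E →L[𝕜] F :=
  F.orthogonalProjectionOnto ∘L T ∘L E.subtypeL

variable {E F : Submodule 𝕜 H} {T : H →L[𝕜] H}

theorem coe_compress [F.HasOrthogonalProjection] (hT : ∀ x ∈ E, T x ∈ F)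
    (x : E) : (compress E F T x : H) = T x := by
  simp [compress, Submodule.starProjection_eq_self_iff.2 (hT x x.2)]

protected theorem IsUpperSemiFredholm.compress [F.HasOrthogonalProjection]
    (hS : IsUpperSemiFredholm T) (hT : ∀ x ∈ E, T x ∈ F) :
    IsUpperSemiFredholm (compress E F T) := by
  obtain ⟨A, hA_closed, hA, c, hc, hbound⟩ := hS
  refine ⟨A.comap E.subtype, hA_closed.preimage continuous_subtype_val, ?_, c, hc, fun x hx => ?_⟩
  · rw [← A.ker_mkQ, ← LinearMap.ker_comp]
    exact .ker _
  · rw [Submodule.coe_norm, Submodule.coe_norm, coe_compress hT]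
    exact hbound x hx

theorem finrank_ker_compress [F.HasOrthogonalProjection]
    (hT : ∀ x ∈ E, T x ∈ F) :
    finrank 𝕜 (compress E F T).ker = finrank 𝕜 (T.ker ⊓ E : Submodule 𝕜 H) := by
  have hker : (compress E F T).ker = T.ker.comap E.subtype := by
    ext x
    simp [← coe_compress hT, LinearMap.mem_ker]
  rw [hker, ← Submodule.finrank_map_subtype_eq, Submodule.map_comap_subtype, inf_comm]

theorem IsOdd.finrank_ker [E.HasOrthogonalProjection] [FiniteDimensional 𝕜 T.ker]
    (hT : IsOdd E T) : finrank 𝕜 T.ker =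
      finrank 𝕜 (T.ker ⊓ E : Submodule 𝕜 H) + finrank 𝕜 (T.ker ⊓ Eᗮ : Submodule 𝕜 H) := by
  have hdisj : (T.ker ⊓ E) ⊓ (T.ker ⊓ Eᗮ) = ⊥ :=
    (E.orthogonal_disjoint.mono inf_le_right inf_le_right).eq_bot
  have hsup : (T.ker ⊓ E) ⊔ (T.ker ⊓ Eᗮ) = T.ker := by
    refine le_antisymm (sup_le inf_le_left inf_le_left) fun x hx => ?_
    obtain ⟨y, hy, z, hz, rfl⟩ := E.exists_add_mem_mem_orthogonal x
    have hyz : T y = -T z := eq_neg_of_add_eq_zero_left (by simpa using hx)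
    have hTy : T y = 0 := Submodule.disjoint_def.1 E.orthogonal_disjoint _
      (hyz ▸ neg_mem (hT.2 z hz)) (hT.1 y hy)
    have hTz : T z = 0 := by simpa [hTy] using hyz
    exact Submodule.add_mem_sup ⟨hTy, hy⟩ ⟨hTz, hz⟩
  rw [← Submodule.finrank_sup_add_finrank_inf_eq, hsup, hdisj, finrank_bot, add_zero]

variable [CompleteSpace H]

/-- The index of the component `E → Eᗮ` of an operator that is odd for the grading
`H = E ⊕ Eᗮ`, expressed through kernels. -/
noncomputable def gradedIndex (E : Submodule 𝕜 H) (T : H →L[𝕜] H) : ℤ :=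
  finrank 𝕜 (T.ker ⊓ E : Submodule 𝕜 H) - finrank 𝕜 ((adjoint T).ker ⊓ Eᗮ : Submodule 𝕜 H)

theorem gradedIndex_neg (E : Submodule 𝕜 H) (T : H →L[𝕜] H) :
    gradedIndex E (-T) = gradedIndex E T := by
  have hker (S : H →L[𝕜] H) : (-S).ker = S.ker := by
    ext x
    simp
  rw [gradedIndex, map_neg, hker, hker, gradedIndex]

theorem adjoint_compress [CompleteSpace E] [CompleteSpace F] :
    adjoint (compress E F T) = compress F E (adjoint T) := by
  rw [compress, adjoint_comp, adjoint_comp, Submodule.adjoint_subtypeL,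
    Submodule.adjoint_orthogonalProjectionOnto, comp_assoc, compress]

protected theorem IsOdd.adjoint [E.HasOrthogonalProjection] (hT : IsOdd E T) :
    IsOdd E (adjoint T) := by
  refine ⟨fun x hx => ?_, fun x hx => ?_⟩
  · exact (Submodule.mem_orthogonal _ _).2 fun y hy => by
      rw [adjoint_inner_right]
      exact Submodule.inner_left_of_mem_orthogonal hx (hT.1 y hy)
  · rw [← E.orthogonal_orthogonal]
    exact (Submodule.mem_orthogonal _ _).2 fun y hy => by
      rw [adjoint_inner_right]
      exact Submodule.inner_right_of_mem_orthogonal (hT.2 y hy) hx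

theorem IsOdd.index_compress [CompleteSpace E] (hT : IsOdd E T)
    (hF : IsFredholm (compress E Eᗮ T)) :
    (compress E Eᗮ T).toLinearMap.index = gradedIndex E T := by
  rw [index_eq_finrank_ker_sub_finrank_ker_adjoint hF.isClosed_range, adjoint_compress,
    finrank_ker_compress hT.1, finrank_ker_compress hT.adjoint.2, gradedIndex]

theorem gradedIndex_eq_of_continuous [CompleteSpace E] {Θ : Type*} [TopologicalSpace Θ]
    [PreconnectedSpace Θ] {T : Θ → H →L[𝕜] H} (hcont : Continuous T) (hodd : ∀ t, IsOdd E (T t))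
    (hT : ∀ t, IsUpperSemiFredholm (T t)) (hT' : ∀ t, IsUpperSemiFredholm (adjoint (T t)))
    (s t : Θ) : gradedIndex E (T s) = gradedIndex E (T t) := by
  have hF (t) : IsFredholm (compress E Eᗮ (T t)) :=
    ((hT t).compress (hodd t).1).isFredholm <| by
      rw [adjoint_compress]
      exact (hT' t).compress (hodd t).adjoint.2
  have hcont' : Continuous fun t => compress E Eᗮ (T t) := by
    unfold compress
    fun_prop
  rw [← (hodd s).index_compress (hF s), ← (hodd t).index_compress (hF t)]
  exact index_eq_of_isFredholm_of_continuous hcont' hF s t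

theorem IsOdd.index_eq [CompleteSpace E] (hodd : IsOdd E T) (hT : IsUpperSemiFredholm T)
    (hT' : IsUpperSemiFredholm (adjoint T)) :
    T.toLinearMap.index = gradedIndex E T - gradedIndex E (adjoint T) := by
  have := hT.finiteDimensional_ker
  have := hT'.finiteDimensional_ker
  rw [index_eq_finrank_ker_sub_finrank_ker_adjoint (hT.isFredholm hT').isClosed_range,
    hodd.finrank_ker, hodd.adjoint.finrank_ker, gradedIndex, gradedIndex, adjoint_adjoint]
  lia

end Graded

end Fredholm

section FockSpace

open ContinuousLinearMap Module Finsupp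
open scoped InnerProductSpace

section SquareSummable

variable {I V W U : Type*} [NormedAddCommGroup V] [InnerProductSpace ℂ V]
  [NormedAddCommGroup W] [InnerProductSpace ℂ W] [NormedAddCommGroup U] [InnerProductSpace ℂ U]

/-- Precomposition with an injection, on square-summable families. -/
noncomputable def reindex (V : Type*) [NormedAddCommGroup V] [InnerProductSpace ℂ V] (f : I ↪ I) :
    lp (fun _ : I => V) 2 →L[ℂ] lp (fun _ : I => V) 2 :=
  LinearMap.mkContinuous
    { toFun u := ⟨fun α => u (f α), memℓp_gen (((lp.memℓp u).summable (by simp)).comp_injective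
        f.injective)⟩
      map_add' _ _ := rfl
      map_smul' _ _ := rfl }
    1 fun u => by
      rw [one_mul]
      refine lp.norm_le_of_forall_sum_le (by simp) (norm_nonneg u) fun s => ?_
      have hsum := lp.sum_rpow_le_norm_rpow (by simp) u (s.map f)
      rw [Finset.sum_map] at hsum
      exact hsum

/-- Multiplication of a square-summable family by a family of scalars in `[-1, 1]`. -/
noncomputable def diagonal (V : Type*) [NormedAddCommGroup V] [InnerProductSpace ℂ V] (w : I → ℝ)
    (hw : ∀ α, |w α| ≤ 1) : lp (fun _ : I => V) 2 →L[ℂ] lp (fun _ : I => V) 2 :=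
  lp.mapCLM 2 (fun α => (w α : ℂ) • ContinuousLinearMap.id ℂ V) zero_le_one fun α => by
    refine (norm_smul_le _ _).trans (mul_le_one₀ ?_ (norm_nonneg _) norm_id_le)
    simpa using hw α

/-- Pointwise application of `A` to a square-summable family. -/
noncomputable def mapCoeff (I : Type*) (A : V →L[ℂ] W) :
    lp (fun _ : I => V) 2 →L[ℂ] lp (fun _ : I => W) 2 :=
  lp.mapCLM 2 (fun _ => A) (norm_nonneg A) fun _ => le_rfl

theorem reindex_apply (f : I ↪ I) (u : lp (fun _ : I => V) 2) (α : I) :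
    reindex V f u α = u (f α) := rfl

theorem diagonal_apply {w : I → ℝ} (hw : ∀ α, |w α| ≤ 1) (u : lp (fun _ : I => V) 2) (α : I) :
    diagonal V w hw u α = (w α : ℂ) • u α := rfl

theorem mapCoeff_apply (A : V →L[ℂ] W) (u : lp (fun _ : I => V) 2) (α : I) :
    mapCoeff I A u α = A (u α) := rfl

theorem norm_mapCoeff_apply_le (A : V →L[ℂ] W) (u : lp (fun _ : I => V) 2) :
    ‖mapCoeff I A u‖ ≤ ‖A‖ * ‖u‖ :=
  (mapCoeff I A).le_of_opNorm_le (lp.norm_mapCLM_le _ _ (norm_nonneg A) _) u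

theorem mapCoeff_comp (B : W →L[ℂ] U) (A : V →L[ℂ] W) :
    mapCoeff I (B ∘L A) = mapCoeff I B ∘L mapCoeff I A := rfl

theorem mapCoeff_add (A B : V →L[ℂ] W) : mapCoeff I (A + B) = mapCoeff I A + mapCoeff I B := rfl

theorem mapCoeff_smul (c : ℂ) (A : V →L[ℂ] W) : mapCoeff I (c • A) = c • mapCoeff I A := rfl

theorem mapCoeff_zero : mapCoeff I (0 : V →L[ℂ] W) = 0 := rfl

variable [CompleteSpace V] [CompleteSpace W]

theorem adjoint_mapCoeff (A : V →L[ℂ] W) : adjoint (mapCoeff I A) = mapCoeff I (adjoint A) := by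
  refine ((eq_adjoint_iff _ _).2 fun u v => ?_).symm
  simp only [lp.inner_eq_tsum, mapCoeff_apply, adjoint_inner_left]

theorem adjoint_diagonal {w : I → ℝ} (hw : ∀ α, |w α| ≤ 1) :
    adjoint (diagonal V w hw) = diagonal V w hw := by
  refine ((eq_adjoint_iff _ _).2 fun u v => ?_).symm
  simp only [lp.inner_eq_tsum, diagonal_apply, inner_smul_left, inner_smul_right,
    Complex.conj_ofReal]

end SquareSummable

section FiniteSupport

variable {I V W : Type*} [NormedAddCommGroup V] [InnerProductSpace ℂ V]
  [NormedAddCommGroup W] [InnerProductSpace ℂ W]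

/-- The inclusion of the finitely supported families into the square-summable ones. -/
noncomputable def ofFinsupp : (I →₀ V) →ₗ[ℂ] lp (fun _ : I => V) 2 where
  toFun g := ⟨(g : I → V), (memℓp_zero g.hasFiniteSupport).of_exponent_ge (by simp)⟩
  map_add' _ _ := rfl
  map_smul' _ _ := rfl

/-- Pointwise multiplication of a finitely supported family by a family of real scalars. -/
noncomputable def scale (φ : I → ℝ) : (I →₀ V) →ₗ[ℂ] (I →₀ V) :=
  lsum ℂ fun α => (φ α : ℂ) • lsingle α

/-- Pointwise application of `A` to a finitely supported family. -/
noncomputable def mapFinsupp (A : V →L[ℂ] W) : (I →₀ V) →ₗ[ℂ] (I →₀ W) :=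
  mapRange.linearMap A.toLinearMap

theorem ofFinsupp_apply (g : I →₀ V) (α : I) : (ofFinsupp g : lp (fun _ : I => V) 2) α = g α := rfl

theorem scale_apply (φ : I → ℝ) (g : I →₀ V) (α : I) : scale φ g α = (φ α : ℂ) • g α := by
  classical
  induction g using induction_linear with
  | zero => simp
  | add g h hg hh => simp [hg, hh]
  | single β v =>
    by_cases hβ : β = α
    · simp [scale, hβ]
    · simp [scale, single_eq_of_ne' hβ]

theorem mapFinsupp_apply (A : V →L[ℂ] W) (g : I →₀ V) (α : I) : mapFinsupp A g α = A (g α) := rfl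

theorem mapCoeff_ofFinsupp (A : V →L[ℂ] W) (g : I →₀ V) :
    mapCoeff I A (ofFinsupp g) = ofFinsupp (mapFinsupp A g) := rfl

theorem diagonal_ofFinsupp {w : I → ℝ} (hw : ∀ α, |w α| ≤ 1) (g : I →₀ V) :
    diagonal V w hw (ofFinsupp g) = ofFinsupp (scale w g) := by
  ext α
  simp [diagonal_apply, ofFinsupp_apply, scale_apply]

theorem inner_ofFinsupp_left (g : I →₀ V) (u : lp (fun _ : I => V) 2) :
    ⟪ofFinsupp g, u⟫_ℂ = g.sum fun α v => ⟪v, u α⟫_ℂ := by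
  rw [lp.inner_eq_tsum, Finsupp.sum]
  exact tsum_eq_sum fun α hα => by simp [ofFinsupp_apply, Finsupp.notMem_support_iff.1 hα]

theorem inner_ofFinsupp_single_left (α : I) (v : V) (u : lp (fun _ : I => V) 2) :
    ⟪ofFinsupp (single α v), u⟫_ℂ = ⟪v, u α⟫_ℂ := by
  rw [inner_ofFinsupp_left, sum_single_index (by simp)]

theorem denseRange_ofFinsupp : DenseRange (ofFinsupp : (I →₀ V) → lp (fun _ : I => V) 2) := by
  classical
  refine fun u => mem_closure_of_tendsto (lp.hasSum_single (by simp) u) (.of_forall fun s => ?_)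
  refine ⟨∑ α ∈ s, single α (u α), ?_⟩
  rw [map_sum]
  refine Finset.sum_congr rfl fun α _ => lp.ext (funext fun β => ?_)
  simp [ofFinsupp_apply, Finsupp.single_apply, lp.single_apply, Pi.single_apply, eq_comm]

theorem inner_ofFinsupp_scale (φ : I → ℝ) (g h : I →₀ V) :
    ⟪ofFinsupp (scale φ g), ofFinsupp h⟫_ℂ = ⟪ofFinsupp g, ofFinsupp (scale φ h)⟫_ℂ := by
  simp only [lp.inner_eq_tsum, ofFinsupp_apply, scale_apply, inner_smul_left, inner_smul_right,
    Complex.conj_ofReal]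

theorem norm_ofFinsupp_scale_le {φ ψ : I → ℝ} (h : ∀ α, |φ α| ≤ |ψ α|) (g : I →₀ V) :
    ‖ofFinsupp (scale φ g)‖ ≤ ‖ofFinsupp (scale ψ g)‖ :=
  lp.norm_mono (by simp) fun α => by
    simpa [ofFinsupp_apply, scale_apply, norm_smul] using
      mul_le_mul_of_nonneg_right (h α) (norm_nonneg (g α))

theorem scale_scale (φ ψ : I → ℝ) (g : I →₀ V) :
    scale φ (scale ψ g) = scale (fun α => φ α * ψ α) g := by
  ext α
  simp only [scale_apply, smul_smul, Complex.ofReal_mul]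

theorem mapFinsupp_scale (A : V →L[ℂ] W) (φ : I → ℝ) (g : I →₀ V) :
    mapFinsupp A (scale φ g) = scale φ (mapFinsupp A g) := by
  ext α
  simp [scale_apply, mapFinsupp_apply]

end FiniteSupport

section Oscillator

variable {ι V W : Type*} [NormedAddCommGroup V] [InnerProductSpace ℂ V]
  [NormedAddCommGroup W] [InnerProductSpace ℂ W]

/-- The creation operator of the `j`-th harmonic oscillator,
`e_α ↦ √(α_j + 1) e_{α + j}`, on finite linear combinations of occupation-number states. -/
noncomputable def create (j : ι) : ((ι →₀ ℕ) →₀ V) →ₗ[ℂ] ((ι →₀ ℕ) →₀ V) :=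
  lmapDomain V ℂ (· + single j 1) ∘ₗ scale fun α => √(α j + 1)

/-- The annihilation operator of the `j`-th harmonic oscillator, adjoint to `create j`. -/
noncomputable def annihilate (j : ι) : ((ι →₀ ℕ) →₀ V) →ₗ[ℂ] ((ι →₀ ℕ) →₀ V) :=
  scale (fun α => √(α j + 1)) ∘ₗ lcomapDomain (· + single j 1) (add_left_injective _)

theorem annihilate_apply (j : ι) (g : (ι →₀ ℕ) →₀ V) (α : ι →₀ ℕ) :
    annihilate j g α = (√(α j + 1) : ℂ) • g (α + single j 1) := by
  simp [annihilate, scale_apply]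

theorem create_single (j : ι) (α : ι →₀ ℕ) (v : V) :
    create j (single α v) = single (α + single j 1) ((√(α j + 1) : ℂ) • v) := by
  simp [create, scale]

theorem create_apply (j : ι) (g : (ι →₀ ℕ) →₀ V) (α : ι →₀ ℕ) :
    create j g α = (√(α j) : ℂ) • g (α - single j 1) := by
  by_cases hα : α j = 0
  · rw [hα, Nat.cast_zero, Real.sqrt_zero, Complex.ofReal_zero, zero_smul]
    refine mapDomain_of_notMem_range _ _ ?_
    rintro ⟨β, rfl⟩
    simp at hα
  · obtain ⟨β, rfl⟩ : ∃ β, α = β + single j 1 :=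
      ⟨α - single j 1, (tsub_add_cancel_of_le (by simpa [Nat.one_le_iff_ne_zero])).symm⟩
    have := mapDomain_apply (add_left_injective (single j 1))
      (scale (fun α => √(α j + 1)) g) β
    rw [scale_apply] at this
    simpa [create] using this

theorem inner_ofFinsupp_create (j : ι) (g h : (ι →₀ ℕ) →₀ V) :
    ⟪ofFinsupp (create j g), ofFinsupp h⟫_ℂ = ⟪ofFinsupp g, ofFinsupp (annihilate j h)⟫_ℂ := by
  induction g using induction_linear with
  | zero => simp
  | add g₁ g₂ h₁ h₂ => simp only [map_add, inner_add_left, h₁, h₂]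
  | single α v =>
    rw [create_single, inner_ofFinsupp_single_left, inner_ofFinsupp_single_left, ofFinsupp_apply,
      ofFinsupp_apply, annihilate_apply, inner_smul_left, inner_smul_right, Complex.conj_ofReal]

theorem annihilate_create_of_ne {i j : ι} (hij : i ≠ j) (g : (ι →₀ ℕ) →₀ V) :
    annihilate i (create j g) = create j (annihilate i g) := by
  ext α
  by_cases hα : α j = 0
  · simp [annihilate_apply, create_apply, hα, single_eq_of_ne' hij]
  · have hle : single j 1 ≤ α := by simpa [Nat.one_le_iff_ne_zero]
    simp [annihilate_apply, create_apply, single_eq_of_ne' hij, single_eq_of_ne hij,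
      tsub_add_eq_add_tsub hle, smul_smul, mul_comm]

theorem annihilate_comm (i j : ι) (g : (ι →₀ ℕ) →₀ V) :
    annihilate i (annihilate j g) = annihilate j (annihilate i g) := by
  by_cases hij : i = j
  · rw [hij]
  · ext α
    simp [annihilate_apply, single_eq_of_ne hij, single_eq_of_ne' hij, smul_smul, mul_comm,
      add_right_comm]

theorem create_comm (i j : ι) (g : (ι →₀ ℕ) →₀ V) :
    create i (create j g) = create j (create i g) := by
  by_cases hij : i = j
  · rw [hij]
  · ext α
    simp [create_apply, single_eq_of_ne hij, single_eq_of_ne' hij, smul_smul, mul_comm,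
      tsub_right_comm]

theorem create_annihilate_self (j : ι) (g : (ι →₀ ℕ) →₀ V) :
    create j (annihilate j g) = scale (fun α => α j) g := by
  ext α
  by_cases hα : α j = 0
  · simp [create_apply, scale_apply, hα]
  · have hle : single j 1 ≤ α := by simpa [Nat.one_le_iff_ne_zero]
    have hj : ((α j - 1 : ℕ) : ℝ) + 1 = α j := by
      exact_mod_cast Nat.sub_add_cancel (Nat.one_le_iff_ne_zero.2 hα)
    simp only [create_apply, annihilate_apply, scale_apply, tsub_apply, single_eq_same, hj,
      tsub_add_cancel_of_le hle, smul_smul, ← Complex.ofReal_mul,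
      Real.mul_self_sqrt (Nat.cast_nonneg _)]

theorem annihilate_create_self (j : ι) (g : (ι →₀ ℕ) →₀ V) :
    annihilate j (create j g) = create j (annihilate j g) + g := by
  ext α
  simp only [create_annihilate_self, annihilate_apply, create_apply, Finsupp.add_apply, scale_apply,
    single_eq_same, add_tsub_cancel_right, smul_smul, Nat.cast_add, Nat.cast_one,
    ← Complex.ofReal_mul, Real.mul_self_sqrt (Nat.cast_add_one_pos _).le]
  push_cast
  rw [add_smul, one_smul]

theorem sum_create_annihilate [Fintype ι] (g : (ι →₀ ℕ) →₀ V) :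
    ∑ j, create j (annihilate j g) = scale (fun α => α.degree) g := by
  ext α
  simp [create_annihilate_self, scale_apply, degree_eq_sum, ← Finset.sum_smul]

theorem create_mapFinsupp (A : V →L[ℂ] W) (j : ι) (g : (ι →₀ ℕ) →₀ V) :
    create j (mapFinsupp A g) = mapFinsupp A (create j g) := by
  ext α
  simp [create_apply, mapFinsupp_apply]

theorem annihilate_mapFinsupp (A : V →L[ℂ] W) (j : ι) (g : (ι →₀ ℕ) →₀ V) :
    annihilate j (mapFinsupp A g) = mapFinsupp A (annihilate j g) := by
  ext α
  simp [annihilate_apply, mapFinsupp_apply]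

end Oscillator

section Gaussian

open MeasureTheory
open scoped ComplexConjugate Nat

theorem integral_norm_pow_mul_exp (k : ℕ) :
    ∫ z : ℂ, ‖z‖ ^ k * Real.exp (-‖z‖ ^ 2) = Real.pi * Real.Gamma (k / 2 + 1) := by
  have h := Complex.integral_rpow_mul_exp_neg_rpow (p := 2) (q := k) one_le_two
    (by linarith [k.cast_nonneg (α := ℝ)])
  simp only [Real.rpow_natCast, Real.rpow_ofNat] at h
  rw [h]
  ring_nf

theorem integrable_norm_pow_mul_exp (k : ℕ) :
    Integrable fun z : ℂ => ‖z‖ ^ k * Real.exp (-‖z‖ ^ 2) := by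
  by_contra h
  have := integral_norm_pow_mul_exp k
  rw [integral_undef h] at this
  exact (by positivity : Real.pi * Real.Gamma (k / 2 + 1) ≠ 0) this.symm

theorem integral_conj_pow_mul_pow_mul_exp_of_ne {a b : ℕ} (hab : a ≠ b) :
    ∫ z : ℂ, conj (z ^ a) * z ^ b * (Real.exp (-‖z‖ ^ 2) : ℂ) = 0 := by
  have hsub : (b - a : ℂ) ≠ 0 := sub_ne_zero.2 (by exact_mod_cast hab.symm)
  let u : Circle := Circle.exp (Real.pi / (b - a))
  have hu : conj ((u : ℂ) ^ a) * (u : ℂ) ^ b = -1 := by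
    rw [Circle.coe_exp, ← Complex.exp_nat_mul, ← Complex.exp_nat_mul, ← Complex.exp_conj,
      ← Complex.exp_add, ← Complex.exp_pi_mul_I]
    congr 1
    simp only [map_mul, map_natCast, Complex.conj_I, Complex.conj_ofReal]
    push_cast
    field_simp
    ring
  have hrot := (rotation u).measurePreserving.integral_comp
    (rotation u).toHomeomorph.measurableEmbedding
    fun z : ℂ => conj (z ^ a) * z ^ b * (Real.exp (-‖z‖ ^ 2) : ℂ)
  have hneg (z : ℂ) : conj ((u * z) ^ a) * (u * z) ^ b * (Real.exp (-‖(u * z : ℂ)‖ ^ 2) : ℂ) =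
      -(conj (z ^ a) * z ^ b * (Real.exp (-‖z‖ ^ 2) : ℂ)) := by
    simp only [mul_pow, map_mul, norm_mul, Circle.norm_coe, one_mul]
    linear_combination conj (z ^ a) * z ^ b * (Real.exp (-‖z‖ ^ 2) : ℂ) * hu
  simp only [rotation_apply, hneg, integral_neg] at hrot
  exact self_eq_neg.1 hrot.symm

theorem integral_conj_pow_mul_pow_mul_exp_self (a : ℕ) :
    ∫ z : ℂ, conj (z ^ a) * z ^ a * (Real.exp (-‖z‖ ^ 2) : ℂ) = Real.pi * a ! := by
  have hreal (z : ℂ) : conj (z ^ a) * z ^ a * (Real.exp (-‖z‖ ^ 2) : ℂ) =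
      ((‖z‖ ^ (2 * a) * Real.exp (-‖z‖ ^ 2) : ℝ) : ℂ) := by
    rw [Complex.conj_mul', norm_pow]
    push_cast
    ring
  simp_rw [hreal]
  rw [integral_complex_ofReal, integral_norm_pow_mul_exp]
  simp [Real.Gamma_nat_eq_factorial]

variable {ι V W : Type*} [Fintype ι] [NormedAddCommGroup V] [InnerProductSpace ℂ V]
  [NormedAddCommGroup W] [InnerProductSpace ℂ W]

/-- The density of the standard Gaussian measure on `ℂ^ι`. -/
noncomputable def gaussianDensity (z : ι → ℂ) : ℝ := ∏ j, Real.exp (-‖z j‖ ^ 2) / Real.pi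

/-- The monomial `∏ j, z j ^ α j`, normalised in the Gaussian `L²` norm. -/
noncomputable def monomialFunction (z : ι → ℂ) (α : ι →₀ ℕ) : ℂ := ∏ j, z j ^ α j / √(α j)!

/-- The value at `z` of the polynomial whose coefficients in the normalised monomials are `g`
(the Bargmann transform of `g`). -/
noncomputable def evalPolynomial (z : ι → ℂ) : ((ι →₀ ℕ) →₀ V) →ₗ[ℂ] V :=
  lsum ℂ fun α => monomialFunction z α • LinearMap.id

theorem evalPolynomial_single (z : ι → ℂ) (α : ι →₀ ℕ) (v : V) :
    evalPolynomial z (single α v) = monomialFunction z α • v := by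
  simp [evalPolynomial]

theorem evalPolynomial_mapFinsupp (z : ι → ℂ) (A : V →L[ℂ] W) (g : (ι →₀ ℕ) →₀ V) :
    evalPolynomial z (mapFinsupp A g) = A (evalPolynomial z g) := by
  induction g using induction_linear with
  | zero => simp
  | add g h hg hh => simp [hg, hh]
  | single α v => simp [mapFinsupp, evalPolynomial_single]

theorem monomialFunction_add_single (z : ι → ℂ) (α : ι →₀ ℕ) (j : ι) :
    (√(α j + 1) : ℂ) * monomialFunction z (α + single j 1) = z j * monomialFunction z α := by
  classical
  have hfactor (i : ι) :
      z i ^ (α + single j 1 : ι →₀ ℕ) i / (√((α + single j 1 : ι →₀ ℕ) i)! : ℂ) =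
      z i ^ α i / √(α i)! * if i = j then z j / √(α j + 1) else 1 := by
    split_ifs with hi
    · subst hi
      simp only [Finsupp.add_apply, single_eq_same, Nat.factorial_succ, Nat.cast_mul,
        Nat.cast_add_one, pow_succ]
      rw [Real.sqrt_mul (by positivity)]
      push_cast
      ring
    · simp [single_eq_of_ne hi]
  have hne : (√(α j + 1) : ℂ) ≠ 0 := by exact_mod_cast (by positivity : √(α j + 1 : ℝ) ≠ 0)
  simp only [monomialFunction, hfactor, Finset.prod_mul_distrib, Finset.prod_ite_eq',
    Finset.mem_univ, if_true]
  field_simp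

theorem evalPolynomial_create (z : ι → ℂ) (j : ι) (g : (ι →₀ ℕ) →₀ V) :
    evalPolynomial z (create j g) = z j • evalPolynomial z g := by
  induction g using induction_linear with
  | zero => simp
  | add g h hg hh => simp only [map_add, smul_add, hg, hh]
  | single α v =>
    rw [create_single, evalPolynomial_single, evalPolynomial_single, smul_smul, smul_smul,
      mul_comm, monomialFunction_add_single]

theorem gaussianDensity_mul_monomialFunction (z : ι → ℂ) (α β : ι →₀ ℕ) :
    gaussianDensity z * (conj (monomialFunction z α) * monomialFunction z β) =
      ∏ j, (Real.pi * √(α j)! * √(β j)! : ℂ)⁻¹ *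
        (conj (z j ^ α j) * z j ^ β j * (Real.exp (-‖z j‖ ^ 2) : ℂ)) := by
  simp only [gaussianDensity, monomialFunction, map_prod, Complex.ofReal_prod,
    ← Finset.prod_mul_distrib]
  refine Finset.prod_congr rfl fun j _ => ?_
  rw [map_div₀, Complex.conj_ofReal]
  push_cast
  field_simp

theorem integrable_gaussianDensity_mul_monomialFunction (α β : ι →₀ ℕ) :
    Integrable fun z : ι → ℂ =>
      gaussianDensity z * (conj (monomialFunction z α) * monomialFunction z β) := by
  simp only [gaussianDensity_mul_monomialFunction]
  rw [volume_pi]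
  refine Integrable.fintype_prod (f := fun j z => (Real.pi * √(α j)! * √(β j)! : ℂ)⁻¹ *
    (conj (z ^ α j) * z ^ β j * (Real.exp (-‖z‖ ^ 2) : ℂ))) fun j => Integrable.const_mul ?_ _
  refine (integrable_norm_pow_mul_exp (α j + β j)).mono' (by fun_prop) (.of_forall fun z => ?_)
  rw [norm_mul, norm_mul, RCLike.norm_conj, norm_pow, norm_pow, ← pow_add, Complex.norm_real,
    Real.norm_of_nonneg (Real.exp_pos _).le]

theorem integral_gaussianDensity_mul_monomialFunction [DecidableEq ι] (α β : ι →₀ ℕ) :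
    ∫ z : ι → ℂ, gaussianDensity z * (conj (monomialFunction z α) * monomialFunction z β) =
      if α = β then 1 else 0 := by
  simp only [gaussianDensity_mul_monomialFunction]
  rw [integral_fintype_prod_volume_eq_prod fun j z => (Real.pi * √(α j)! * √(β j)! : ℂ)⁻¹ *
        (conj (z ^ α j) * z ^ β j * (Real.exp (-‖z‖ ^ 2) : ℂ))]
  simp only [integral_const_mul]
  split_ifs with h
  · subst h
    refine Finset.prod_eq_one fun j _ => ?_
    have hsq : (√(α j)! : ℂ) * √(α j)! = (α j)! := by
      exact_mod_cast congrArg Complex.ofReal (Real.mul_self_sqrt (Nat.cast_nonneg (α j)!))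
    rw [integral_conj_pow_mul_pow_mul_exp_self, mul_assoc (Real.pi : ℂ), hsq]
    exact inv_mul_cancel₀ (mul_ne_zero (by simp [Real.pi_ne_zero])
      (by exact_mod_cast (α j).factorial_ne_zero))
  · obtain ⟨j, hj⟩ := DFunLike.ne_iff.1 h
    exact Finset.prod_eq_zero (Finset.mem_univ j) (by
      rw [integral_conj_pow_mul_pow_mul_exp_of_ne hj, mul_zero])

theorem inner_evalPolynomial_single (z : ι → ℂ) (α β : ι →₀ ℕ) (v w : V) :
    gaussianDensity z * ⟪evalPolynomial z (single α v), evalPolynomial z (single β w)⟫_ℂ =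
      gaussianDensity z * (conj (monomialFunction z α) * monomialFunction z β) * ⟪v, w⟫_ℂ := by
  rw [evalPolynomial_single, evalPolynomial_single, inner_smul_left, inner_smul_right]
  ring

/-- `f` is integrable against the Gaussian measure on `ℂ^ι`, with mean `c`. -/
def HasGaussianMean (f : (ι → ℂ) → ℂ) (c : ℂ) : Prop :=
  Integrable (fun z => gaussianDensity z * f z) ∧ ∫ z, gaussianDensity z * f z = c

theorem HasGaussianMean.add {f₁ f₂ : (ι → ℂ) → ℂ} {c₁ c₂ : ℂ} (h₁ : HasGaussianMean f₁ c₁)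
    (h₂ : HasGaussianMean f₂ c₂) : HasGaussianMean (fun z => f₁ z + f₂ z) (c₁ + c₂) := by
  unfold HasGaussianMean
  simp only [mul_add]
  exact ⟨h₁.1.add h₂.1, by rw [integral_add h₁.1 h₂.1, h₁.2, h₂.2]⟩

theorem HasGaussianMean.sum {κ : Type*} {s : Finset κ} {f : κ → (ι → ℂ) → ℂ} {c : κ → ℂ}
    (h : ∀ k ∈ s, HasGaussianMean (f k) (c k)) :
    HasGaussianMean (fun z => ∑ k ∈ s, f k z) (∑ k ∈ s, c k) := by
  unfold HasGaussianMean
  simp only [Finset.mul_sum]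
  exact ⟨integrable_finsetSum _ fun k hk => (h k hk).1, by
    rw [integral_finsetSum _ fun k hk => (h k hk).1, Finset.sum_congr rfl fun k hk => (h k hk).2]⟩

theorem HasGaussianMean.const_mul {f : (ι → ℂ) → ℂ} {c : ℂ} (h : HasGaussianMean f c) (k : ℂ) :
    HasGaussianMean (fun z => k * f z) (k * c) := by
  unfold HasGaussianMean
  simp only [mul_left_comm _ k]
  exact ⟨h.1.const_mul k, by rw [integral_const_mul, h.2]⟩

theorem HasGaussianMean.mono {f₁ f₂ : (ι → ℂ) → ℝ} {c₁ c₂ : ℝ}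
    (h₁ : HasGaussianMean (fun z => f₁ z) c₁) (h₂ : HasGaussianMean (fun z => f₂ z) c₂)
    (hle : ∀ z, f₁ z ≤ f₂ z) : c₁ ≤ c₂ := by
  have hreal {f : (ι → ℂ) → ℝ} {c : ℝ} (h : HasGaussianMean (fun z => f z) c) :
      Integrable (fun z => gaussianDensity z * f z) ∧ ∫ z, gaussianDensity z * f z = c := by
    unfold HasGaussianMean at h
    simp only [← Complex.ofReal_mul, integral_complex_ofReal, Complex.ofReal_inj] at h
    exact ⟨by simpa using h.1.re, h.2⟩
  rw [← (hreal h₁).2, ← (hreal h₂).2]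
  refine integral_mono (hreal h₁).1 (hreal h₂).1 fun z => mul_le_mul_of_nonneg_left (hle z) ?_
  exact Finset.prod_nonneg fun j _ => by positivity

theorem hasGaussianMean_inner_evalPolynomial (g h : (ι →₀ ℕ) →₀ V) :
    HasGaussianMean (fun z => ⟪evalPolynomial z g, evalPolynomial z h⟫_ℂ)
      ⟪ofFinsupp g, ofFinsupp h⟫_ℂ := by
  classical
  induction g using induction_linear with
  | zero => simp [HasGaussianMean]
  | add g₁ g₂ h₁ h₂ => simpa only [map_add, inner_add_left] using h₁.add h₂
  | single α v =>
    induction h using induction_linear with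
    | zero => simp [HasGaussianMean]
    | add g₁ g₂ h₁ h₂ => simpa only [map_add, inner_add_right] using h₁.add h₂
    | single β w =>
      simp only [HasGaussianMean, inner_evalPolynomial_single]
      refine ⟨(integrable_gaussianDensity_mul_monomialFunction α β).mul_const _, ?_⟩
      rw [integral_mul_const, integral_gaussianDensity_mul_monomialFunction,
        inner_ofFinsupp_single_left, ofFinsupp_apply, Finsupp.single_apply]
      by_cases hαβ : α = β
      · simp [hαβ]
      · simp [hαβ, Ne.symm hαβ]

end Gaussian

section Garding

open MeasureTheory
open scoped ComplexConjugate

variable {ι V : Type*} [NormedAddCommGroup V] [InnerProductSpace ℂ V]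

theorem inner_ofFinsupp_create_right (j : ι) (g h : (ι →₀ ℕ) →₀ V) :
    ⟪ofFinsupp g, ofFinsupp (create j h)⟫_ℂ = ⟪ofFinsupp (annihilate j g), ofFinsupp h⟫_ℂ := by
  rw [← inner_conj_symm, inner_ofFinsupp_create, inner_conj_symm]

theorem inner_self_eq_ofReal_norm_sq (x : V) : ⟪x, x⟫_ℂ = ((‖x‖ ^ 2 : ℝ) : ℂ) := by
  rw [inner_self_eq_norm_sq_to_K, Complex.ofReal_pow]
  rfl

variable [Fintype ι]

/-- The `ℝ`-linear symbol `z ↦ ∑ j, z_j a_j + z̄_j b_j`. Every real-linear map from `ℂ^ι` to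
complex operators is of this form. -/
noncomputable def symbol {M : Type*} [AddCommMonoid M] [Module ℂ M] (a b : ι → M) (z : ι → ℂ) : M :=
  ∑ j, (z j • a j + conj (z j) • b j)

/-- The lower bound `‖(symbol a b z + γ) x‖ ≥ c √(|z|² + r²) ‖x‖`, with both sides squared. -/
def IsElliptic (c r : ℝ) (a b : ι → V →L[ℂ] V) (γ : V →L[ℂ] V) : Prop :=
  ∀ (z : ι → ℂ) (x : V),
    c ^ 2 * ((∑ j, ‖z j‖ ^ 2 + r ^ 2) * ‖x‖ ^ 2) ≤ ‖(symbol a b z + γ) x‖ ^ 2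

/-- The quantisation of `symbol a b`: the coordinates `z_j` and `z̄_j` become creation and
annihilation operators. -/
noncomputable def quantization (a b : ι → V →L[ℂ] V) :
    ((ι →₀ ℕ) →₀ V) →ₗ[ℂ] ((ι →₀ ℕ) →₀ V) :=
  ∑ j, (mapFinsupp (a j) ∘ₗ create j + mapFinsupp (b j) ∘ₗ annihilate j)

theorem sum_inner_create_create (f : ι → (ι →₀ ℕ) →₀ V) :
    ∑ i, ∑ j, ⟪ofFinsupp (create j (f i)), ofFinsupp (create i (f j))⟫_ℂ =
      ⟪ofFinsupp (∑ j, annihilate j (f j)), ofFinsupp (∑ j, annihilate j (f j))⟫_ℂ +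
        ∑ j, ⟪ofFinsupp (f j), ofFinsupp (f j)⟫_ℂ := by
  classical
  have hterm (i j : ι) : ⟪ofFinsupp (create j (f i)), ofFinsupp (create i (f j))⟫_ℂ =
      ⟪ofFinsupp (annihilate i (f i)), ofFinsupp (annihilate j (f j))⟫_ℂ +
        if i = j then ⟪ofFinsupp (f i), ofFinsupp (f j)⟫_ℂ else 0 := by
    rw [inner_ofFinsupp_create, ← inner_ofFinsupp_create_right]
    split_ifs with hij
    · rw [hij, annihilate_create_self, map_add, inner_add_right]
    · rw [annihilate_create_of_ne (Ne.symm hij), add_zero]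
  simp only [hterm, Finset.sum_add_distrib, Finset.sum_ite_eq, Finset.mem_univ, if_true, map_sum,
    sum_inner, inner_sum]
  rw [Finset.sum_comm]

variable (a b : ι → V →L[ℂ] V) (γ : V →L[ℂ] V) (g : (ι →₀ ℕ) →₀ V)

/-- The part of `quantization a b g + γ g` built from `z_j` and constants only. -/
noncomputable def holomorphicPart : (ι →₀ ℕ) →₀ V :=
  ∑ j, mapFinsupp (a j) (create j g) + mapFinsupp γ g

theorem symbol_evalPolynomial (z : ι → ℂ) :
    (symbol a b z + γ) (evalPolynomial z g) = evalPolynomial z (holomorphicPart a γ g) +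
      ∑ j, conj (z j) • evalPolynomial z (mapFinsupp (b j) g) := by
  simp only [symbol, holomorphicPart, _root_.add_apply, _root_.sum_apply, _root_.smul_apply,
    map_add, map_sum, evalPolynomial_mapFinsupp, evalPolynomial_create, map_smul,
    Finset.sum_add_distrib]
  abel

theorem quantization_eq_holomorphicPart_add :
    quantization a b g + mapFinsupp γ g =
      holomorphicPart a γ g + ∑ j, annihilate j (mapFinsupp (b j) g) := by
  simp only [quantization, holomorphicPart, LinearMap.sum_apply, LinearMap.add_apply,
    LinearMap.comp_apply, Finset.sum_add_distrib, annihilate_mapFinsupp]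
  abel

theorem hasGaussianMean_inner_symbol_evalPolynomial :
    HasGaussianMean
      (fun z => ⟪(symbol a b z + γ) (evalPolynomial z g),
        (symbol a b z + γ) (evalPolynomial z g)⟫_ℂ)
      (⟪ofFinsupp (quantization a b g + mapFinsupp γ g),
          ofFinsupp (quantization a b g + mapFinsupp γ g)⟫_ℂ +
        ∑ j, ⟪ofFinsupp (mapFinsupp (b j) g), ofFinsupp (mapFinsupp (b j) g)⟫_ℂ) := by
  set p := holomorphicPart a γ g
  set f := fun j => mapFinsupp (b j) g
  have hmean := hasGaussianMean_inner_evalPolynomial (ι := ι) (V := V)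
  convert ((hmean p p).add (.sum (s := Finset.univ) fun j _ => hmean (create j p) (f j))).add
    ((HasGaussianMean.sum (s := Finset.univ) fun j _ => hmean (f j) (create j p)).add
      (.sum (s := Finset.univ) fun i _ => .sum (s := Finset.univ) fun j _ =>
        hmean (create j (f i)) (create i (f j)))) using 1
  · ext z
    simp only [symbol_evalPolynomial, inner_add_left, inner_add_right, sum_inner, inner_sum,
      evalPolynomial_create, inner_smul_left, inner_smul_right, RCLike.conj_conj, mul_add,
      Finset.mul_sum, Finset.sum_add_distrib]
    rw [Finset.sum_comm (f := fun i j => conj (z i) * _)]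
    simp only [mul_left_comm, p, f]
    ring
  · rw [sum_inner_create_create, quantization_eq_holomorphicPart_add, map_add]
    simp only [inner_ofFinsupp_create, inner_ofFinsupp_create_right, inner_add_left,
      inner_add_right, map_sum, sum_inner, inner_sum, Finset.sum_add_distrib, p, f]
    ring

variable {a b γ}

/-- Integrating a pointwise lower bound of the symbol against the Gaussian measure bounds the
quantisation from below, the error `∑ j, ‖b_j g‖²` being of order zero. -/
theorem IsElliptic.garding_inequality {c r : ℝ} (h : IsElliptic c r a b γ) :
    c ^ 2 * (∑ j, ‖ofFinsupp (create j g)‖ ^ 2 + r ^ 2 * ‖ofFinsupp g‖ ^ 2) ≤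
      ‖ofFinsupp (quantization a b g + mapFinsupp γ g)‖ ^ 2 +
        ∑ j, ‖ofFinsupp (mapFinsupp (b j) g)‖ ^ 2 := by
  have hmean (h : (ι →₀ ℕ) →₀ V) := hasGaussianMean_inner_evalPolynomial (ι := ι) h h
  have hlower := ((HasGaussianMean.sum (s := Finset.univ) fun j _ => hmean (create j g)).add
    ((hmean g).const_mul (r ^ 2 : ℝ))).const_mul (c ^ 2 : ℝ)
  have hupper := hasGaussianMean_inner_symbol_evalPolynomial a b γ g
  simp only [inner_self_eq_ofReal_norm_sq, ← Complex.ofReal_sum, ← Complex.ofReal_mul,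
    ← Complex.ofReal_add] at hlower hupper
  refine hlower.mono hupper fun z => (h z (evalPolynomial z g)).trans_eq' ?_
  simp only [evalPolynomial_create, norm_smul, mul_pow, ← Finset.sum_mul, add_mul]

end Garding

section Weight

/-- The weight `(n + 1) ^ (-1/4)`. Inserted on both sides of a creation or annihilation operator
it makes the operator bounded. -/
noncomputable def weight (n : ℕ) : ℝ := (√√(n + 1))⁻¹

theorem weight_pos (n : ℕ) : 0 < weight n := by
  unfold weight
  positivity

theorem weight_sq (n : ℕ) : weight n ^ 2 = (√(n + 1))⁻¹ := by
  rw [weight, inv_pow, Real.sq_sqrt (Real.sqrt_nonneg _)]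

theorem weight_pow_four (n : ℕ) : weight n ^ 4 = ((n : ℝ) + 1)⁻¹ := by
  rw [show 4 = 2 * 2 from rfl, pow_mul, weight_sq, inv_pow, Real.sq_sqrt (by positivity)]

theorem sqrt_mul_weight_sq (n : ℕ) : √(n + 1) * weight n ^ 2 = 1 := by
  rw [weight_sq]
  exact mul_inv_cancel₀ (by positivity)

theorem weight_antitone : Antitone weight := fun m n hmn => by
  unfold weight
  gcongr

theorem weight_le_one (n : ℕ) : weight n ≤ 1 := by
  simpa [weight] using weight_antitone (Nat.zero_le n)

theorem weight_sub_weight_succ_le (n : ℕ) :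
    weight n - weight (n + 1) ≤ weight n * weight (n + 1) ^ 4 := by
  have hle := weight_antitone n.le_succ
  have hpos := weight_pos n
  have hpos' := weight_pos (n + 1)
  have hdiff : weight n ^ 4 - weight (n + 1) ^ 4 = weight n ^ 4 * weight (n + 1) ^ 4 := by
    rw [weight_pow_four, weight_pow_four]
    push_cast
    field_simp
    ring
  refine le_of_mul_le_mul_left ?_ (pow_pos hpos 3)
  calc weight n ^ 3 * (weight n - weight (n + 1))
      = weight n ^ 4 - weight n ^ 3 * weight (n + 1) := by ring
    _ ≤ weight n ^ 4 - weight (n + 1) ^ 3 * weight (n + 1) := by gcongr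
    _ = weight n ^ 3 * (weight n * weight (n + 1) ^ 4) := by linear_combination hdiff

theorem weight_succ_pow_four_le (n : ℕ) : weight (n + 1) ^ 4 ≤ weight (n + 1) ^ 2 :=
  pow_le_pow_of_le_one (weight_pos _).le (weight_le_one _) (by norm_num)

theorem sqrt_mul_abs_weight_sub_succ_le (n : ℕ) :
    √(n + 1) * |weight n * (weight n - weight (n + 1))| ≤ weight n ^ 2 := by
  have hpos := weight_pos n
  have hsub := sub_nonneg.2 (weight_antitone n.le_succ)
  rw [abs_of_nonneg (mul_nonneg hpos.le hsub)]
  calc √(n + 1) * (weight n * (weight n - weight (n + 1)))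
      ≤ √(n + 1) * (weight n * (weight n * weight (n + 1) ^ 4)) := by
        gcongr
        exact weight_sub_weight_succ_le n
    _ = weight (n + 1) ^ 4 := by linear_combination weight (n + 1) ^ 4 * sqrt_mul_weight_sq n
    _ ≤ weight (n + 1) ^ 2 := weight_succ_pow_four_le n
    _ ≤ weight n ^ 2 := by
        gcongr
        · exact (weight_pos _).le
        · exact weight_antitone n.le_succ

theorem sqrt_mul_abs_weight_sub_pred_le (n : ℕ) :
    √n * |weight n * (weight n - weight (n - 1))| ≤ weight n ^ 2 := by
  obtain rfl | ⟨k, rfl⟩ : n = 0 ∨ ∃ k, n = k + 1 := by cases n <;> simp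
  · simpa using sq_nonneg (weight 0)
  have hpos := weight_pos k
  have hpos' := weight_pos (k + 1)
  have hle := weight_antitone k.le_succ
  rw [abs_mul, abs_of_pos hpos', Nat.add_sub_cancel, abs_sub_comm, abs_of_nonneg (sub_nonneg.2 hle)]
  push_cast
  calc √(k + 1) * (weight (k + 1) * (weight k - weight (k + 1)))
      ≤ √(k + 1) * (weight k * (weight k * weight (k + 1) ^ 4)) := by
        gcongr
        exact weight_sub_weight_succ_le k
    _ = weight (k + 1) ^ 4 := by linear_combination weight (k + 1) ^ 4 * sqrt_mul_weight_sq k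
    _ ≤ weight (k + 1) ^ 2 := weight_succ_pow_four_le k

end Weight

section BoundedOperator

variable {ι V W : Type*} [NormedAddCommGroup V] [InnerProductSpace ℂ V]
  [NormedAddCommGroup W] [InnerProductSpace ℂ W]

/-- The weight of an occupation-number state, a function of its total degree. -/
noncomputable def degreeWeight (α : ι →₀ ℕ) : ℝ := weight α.degree

theorem abs_sqrt_mul_degreeWeight_le_one (j : ι) (α : ι →₀ ℕ) :
    |√(α j + 1) * (degreeWeight α * degreeWeight (α + single j 1))| ≤ 1 := by
  have hpos := weight_pos α.degree
  have hpos' := weight_pos (α.degree + 1)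
  have hdegree : (α + single j 1).degree = α.degree + 1 := by simp
  rw [degreeWeight, degreeWeight, hdegree, abs_of_nonneg
    (mul_nonneg (Real.sqrt_nonneg _) (mul_pos hpos hpos').le)]
  calc √(α j + 1) * (weight α.degree * weight (α.degree + 1))
      ≤ √(α.degree + 1) * (weight α.degree * weight α.degree) := by
        gcongr
        · exact le_degree j α
        · exact weight_antitone α.degree.le_succ
    _ = 1 := by rw [← sq, sqrt_mul_weight_sq]

/-- The annihilation operator with `degreeWeight` inserted on both sides. -/
noncomputable def lower (V : Type*) [NormedAddCommGroup V] [InnerProductSpace ℂ V] (j : ι) :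
    lp (fun _ : ι →₀ ℕ => V) 2 →L[ℂ] lp (fun _ : ι →₀ ℕ => V) 2 :=
  diagonal V (fun α => √(α j + 1) * (degreeWeight α * degreeWeight (α + single j 1)))
    (abs_sqrt_mul_degreeWeight_le_one j) ∘L reindex V (addRightEmbedding (single j 1))

theorem lower_ofFinsupp (j : ι) (g : (ι →₀ ℕ) →₀ V) : lower V j (ofFinsupp g) =
    ofFinsupp (scale degreeWeight (annihilate j (scale degreeWeight g))) := by
  ext α
  simp only [lower, coe_comp, Function.comp_apply, diagonal_apply, reindex_apply, ofFinsupp_apply,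
    scale_apply, annihilate_apply, addRightEmbedding_apply, smul_smul, ← Complex.ofReal_mul]
  ring_nf

theorem lower_comp_mapCoeff (A : V →L[ℂ] W) (j : ι) :
    lower W j ∘L mapCoeff _ A = mapCoeff _ A ∘L lower V j := by
  ext u α
  simp [lower, diagonal_apply, reindex_apply, mapCoeff_apply]

theorem abs_degreeWeight_sq_le_one (α : ι →₀ ℕ) : |degreeWeight α ^ 2| ≤ 1 := by
  rw [abs_of_nonneg (sq_nonneg _)]
  exact pow_le_one₀ (weight_pos _).le (weight_le_one _)

/-- Multiplication by `(n + 1) ^ (-1/2)` in degree `n`, a compact operator when `V` is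
finite-dimensional. -/
noncomputable def damping (ι V : Type*) [NormedAddCommGroup V] [InnerProductSpace ℂ V] :
    lp (fun _ : ι →₀ ℕ => V) 2 →L[ℂ] lp (fun _ : ι →₀ ℕ => V) 2 :=
  diagonal V (fun α => degreeWeight α ^ 2) abs_degreeWeight_sq_le_one

theorem damping_ofFinsupp (g : (ι →₀ ℕ) →₀ V) :
    damping ι V (ofFinsupp g) = ofFinsupp (scale (fun α => degreeWeight α ^ 2) g) :=
  diagonal_ofFinsupp _ g

variable [CompleteSpace V]

theorem adjoint_lower_ofFinsupp (j : ι) (g : (ι →₀ ℕ) →₀ V) : adjoint (lower V j) (ofFinsupp g) =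
    ofFinsupp (scale degreeWeight (create j (scale degreeWeight g))) := by
  ext α
  refine ext_inner_left ℂ fun v => ?_
  rw [← inner_ofFinsupp_single_left, ← inner_ofFinsupp_single_left, adjoint_inner_right,
    lower_ofFinsupp, inner_ofFinsupp_scale, ← inner_ofFinsupp_create_right, inner_ofFinsupp_scale]

theorem adjoint_lower_comp_mapCoeff [CompleteSpace W] (A : V →L[ℂ] W) (j : ι) :
    adjoint (lower W j) ∘L mapCoeff _ A = mapCoeff _ A ∘L adjoint (lower V j) := by
  have h := congrArg adjoint (lower_comp_mapCoeff (adjoint A) j)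
  rw [adjoint_comp, adjoint_comp, adjoint_mapCoeff, adjoint_adjoint] at h
  exact h.symm

variable [Fintype ι]

/-- The bounded operator of order zero on Fock space with symbol `symbol a b`: creation and
annihilation operators, weighted on both sides, replace `z_j` and `z̄_j`. -/
noncomputable def fockOperator (a b : ι → V →L[ℂ] V) :
    lp (fun _ : ι →₀ ℕ => V) 2 →L[ℂ] lp (fun _ : ι →₀ ℕ => V) 2 :=
  ∑ j, (mapCoeff _ (a j) ∘L adjoint (lower V j) + mapCoeff _ (b j) ∘L lower V j)

theorem fockOperator_ofFinsupp (a b : ι → V →L[ℂ] V) (g : (ι →₀ ℕ) →₀ V) :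
    fockOperator a b (ofFinsupp g) =
      ofFinsupp (scale degreeWeight (quantization a b (scale degreeWeight g))) := by
  simp only [fockOperator, quantization, _root_.sum_apply, _root_.add_apply, coe_comp,
    Function.comp_apply, adjoint_lower_ofFinsupp, lower_ofFinsupp, mapCoeff_ofFinsupp,
    LinearMap.sum_apply, LinearMap.add_apply, LinearMap.comp_apply, map_sum, map_add,
    mapFinsupp_scale]

theorem adjoint_fockOperator (a b : ι → V →L[ℂ] V) : adjoint (fockOperator a b) =
    fockOperator (fun j => adjoint (b j)) fun j => adjoint (a j) := by
  simp only [fockOperator, map_sum, map_add, adjoint_comp, adjoint_mapCoeff, adjoint_adjoint,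
    lower_comp_mapCoeff, adjoint_lower_comp_mapCoeff]
  exact Finset.sum_congr rfl fun j _ => add_comm _ _

theorem fockOperator_add (a b a' b' : ι → V →L[ℂ] V) :
    fockOperator (a + a') (b + b') = fockOperator a b + fockOperator a' b' := by
  simp only [fockOperator, Pi.add_apply, mapCoeff_add, add_comp, ← Finset.sum_add_distrib]
  exact Finset.sum_congr rfl fun j _ => add_add_add_comm _ _ _ _

theorem fockOperator_smul (k : ℂ) (a b : ι → V →L[ℂ] V) :
    fockOperator (k • a) (k • b) = k • fockOperator a b := by
  simp only [fockOperator, Pi.smul_apply, mapCoeff_smul, smul_comp, Finset.smul_sum, smul_add]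

theorem mapCoeff_comp_fockOperator [CompleteSpace W] {a b : ι → V →L[ℂ] V}
    {a' b' : ι → W →L[ℂ] W} {P P' : V →L[ℂ] W} (ha : ∀ j, P' ∘L a j = a' j ∘L P)
    (hb : ∀ j, P' ∘L b j = b' j ∘L P) :
    mapCoeff _ P' ∘L fockOperator a b = fockOperator a' b' ∘L mapCoeff _ P := by
  simp only [fockOperator, comp_finsetSum, finsetSum_comp, comp_add, add_comp, ← comp_assoc,
    ← mapCoeff_comp, ha, hb]
  simp only [mapCoeff_comp, comp_assoc, lower_comp_mapCoeff, adjoint_lower_comp_mapCoeff]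

end BoundedOperator

section Ellipticity

variable {ι V : Type*} [NormedAddCommGroup V] [InnerProductSpace ℂ V]

theorem norm_eq_of_inner_self_eq {W : Type*} [NormedAddCommGroup W] [InnerProductSpace ℂ W]
    {x : V} {y : W} (h : ⟪x, x⟫_ℂ = ⟪y, y⟫_ℂ) : ‖x‖ = ‖y‖ := by
  rw [norm_eq_sqrt_re_inner (𝕜 := ℂ), norm_eq_sqrt_re_inner (𝕜 := ℂ), h]

theorem norm_ofFinsupp_create (j : ι) (g : (ι →₀ ℕ) →₀ V) :
    ‖ofFinsupp (create j g)‖ = ‖ofFinsupp (scale (fun α => √(α j + 1)) g)‖ := by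
  refine norm_eq_of_inner_self_eq ?_
  rw [inner_ofFinsupp_create, inner_ofFinsupp_scale, annihilate_create_self,
    create_annihilate_self, scale_scale]
  congr 2
  ext α
  simp only [Finsupp.add_apply, scale_apply, Real.mul_self_sqrt (Nat.cast_add_one_pos (α j)).le,
    Complex.ofReal_add, Complex.ofReal_one, add_smul, one_smul]

theorem norm_ofFinsupp_annihilate (j : ι) (g : (ι →₀ ℕ) →₀ V) :
    ‖ofFinsupp (annihilate j g)‖ = ‖ofFinsupp (scale (fun α => √(α j)) g)‖ := by
  refine norm_eq_of_inner_self_eq ?_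
  rw [← inner_ofFinsupp_create_right, inner_ofFinsupp_scale, create_annihilate_self, scale_scale]
  simp only [Real.mul_self_sqrt (Nat.cast_nonneg _)]

theorem norm_sq_ofFinsupp_scale {I : Type*} (φ : I → ℝ) (g : I →₀ V) :
    ‖ofFinsupp (scale φ g)‖ ^ 2 = ∑ α ∈ g.support, φ α ^ 2 * ‖g α‖ ^ 2 := by
  apply Complex.ofReal_injective
  rw [← inner_self_eq_ofReal_norm_sq, inner_ofFinsupp_scale, inner_ofFinsupp_left, Finsupp.sum,
    Complex.ofReal_sum]
  refine Finset.sum_congr rfl fun α _ => ?_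
  rw [ofFinsupp_apply, scale_scale, scale_apply, inner_smul_right, inner_self_eq_ofReal_norm_sq,
    ← sq, Complex.ofReal_mul]

theorem norm_ofFinsupp_scale_sqrt_degree_le [Fintype ι] [Nonempty ι] (g : (ι →₀ ℕ) →₀ V) :
    ‖ofFinsupp (scale (fun α => √(α.degree + 1)) g)‖ ^ 2 ≤ ∑ j, ‖ofFinsupp (create j g)‖ ^ 2 := by
  simp only [norm_ofFinsupp_create, norm_sq_ofFinsupp_scale,
    Real.sq_sqrt (Nat.cast_add_one_pos _).le]
  rw [Finset.sum_comm]
  refine Finset.sum_le_sum fun α _ => ?_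
  rw [← Finset.sum_mul]
  gcongr
  have hcard : (1 : ℝ) ≤ Fintype.card ι := by exact_mod_cast Fintype.card_pos
  simpa [degree_eq_sum, Finset.sum_add_distrib] using hcard

theorem scale_create (φ : (ι →₀ ℕ) → ℝ) (j : ι) (g : (ι →₀ ℕ) →₀ V) :
    scale φ (create j g) = create j (scale (fun α => φ (α + single j 1)) g) := by
  induction g using induction_linear with
  | zero => simp
  | add g h hg hh => simp only [map_add, hg, hh]
  | single α v => simp [create_single, scale, smul_smul, mul_comm]

theorem scale_annihilate (φ : (ι →₀ ℕ) → ℝ) (j : ι) (g : (ι →₀ ℕ) →₀ V) :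
    scale φ (annihilate j g) = annihilate j (scale (fun α => φ (α - single j 1)) g) := by
  ext α
  simp [annihilate_apply, scale_apply, smul_smul, mul_comm]

theorem norm_commutator_create_le (j : ι) (g : (ι →₀ ℕ) →₀ V) :
    ‖ofFinsupp (create j (scale (fun α => degreeWeight α ^ 2) g) -
      scale degreeWeight (create j (scale degreeWeight g)))‖ ≤ ‖damping ι V (ofFinsupp g)‖ := by
  set τ : (ι →₀ ℕ) → ℝ := fun α => weight α.degree * (weight α.degree - weight (α.degree + 1))
  have hcomm : create j (scale (fun α => degreeWeight α ^ 2) g) -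
      scale degreeWeight (create j (scale degreeWeight g)) = create j (scale τ g) := by
    rw [scale_create, scale_scale, ← map_sub]
    congr 1
    ext α
    simp only [degreeWeight, Finsupp.sub_apply, scale_apply, ← sub_smul, map_add, degree_single,
      ← Complex.ofReal_sub, τ]
    ring_nf
  rw [hcomm, norm_ofFinsupp_create, scale_scale, damping_ofFinsupp]
  refine norm_ofFinsupp_scale_le (fun α => ?_) g
  rw [abs_mul, abs_of_nonneg (Real.sqrt_nonneg _), abs_of_nonneg (sq_nonneg (degreeWeight α))]
  refine le_trans ?_ (sqrt_mul_abs_weight_sub_succ_le α.degree)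
  gcongr
  exact le_degree j α

theorem norm_commutator_annihilate_le (j : ι) (g : (ι →₀ ℕ) →₀ V) :
    ‖ofFinsupp (annihilate j (scale (fun α => degreeWeight α ^ 2) g) -
      scale degreeWeight (annihilate j (scale degreeWeight g)))‖ ≤ ‖damping ι V (ofFinsupp g)‖ := by
  set τ : (ι →₀ ℕ) → ℝ := fun α => degreeWeight α * (degreeWeight α - degreeWeight (α - single j 1))
  have hcomm : annihilate j (scale (fun α => degreeWeight α ^ 2) g) -
      scale degreeWeight (annihilate j (scale degreeWeight g)) = annihilate j (scale τ g) := by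
    rw [scale_annihilate, scale_scale, ← map_sub]
    congr 1
    ext α
    simp only [Finsupp.sub_apply, scale_apply, ← sub_smul, ← Complex.ofReal_sub, τ]
    ring_nf
  rw [hcomm, norm_ofFinsupp_annihilate, scale_scale, damping_ofFinsupp]
  refine norm_ofFinsupp_scale_le (fun α => ?_) g
  rw [abs_mul, abs_of_nonneg (Real.sqrt_nonneg _), abs_of_nonneg (sq_nonneg (degreeWeight α))]
  obtain hα | hα := (α j).eq_zero_or_pos
  · simp [hα, sq_nonneg]
  have hle : single j 1 ≤ α := by simpa [Nat.one_le_iff_ne_zero] using hα.ne'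
  have hdegree : (α - single j 1).degree = α.degree - 1 := by
    rw [← congrArg degree (tsub_add_cancel_of_le hle), map_add, degree_single,
      Nat.add_sub_cancel]
  simp only [τ, degreeWeight, hdegree]
  refine le_trans ?_ (sqrt_mul_abs_weight_sub_pred_le α.degree)
  gcongr
  exact le_degree j α

theorem sum_norm_sq_mapCoeff_le {W : Type*} [NormedAddCommGroup W] [InnerProductSpace ℂ W]
    [Fintype ι] {I : Type*} (A : ι → V →L[ℂ] W) (u : lp (fun _ : I => V) 2) :
    ∑ j, ‖mapCoeff I (A j) u‖ ^ 2 ≤ ((∑ j, ‖A j‖) * ‖u‖) ^ 2 := by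
  rw [Finset.sum_mul]
  refine le_trans (Finset.sum_le_sum fun j _ => pow_le_pow_left₀ (norm_nonneg _)
    (norm_mapCoeff_apply_le (A j) u) 2) ?_
  exact Finset.sum_sq_le_sq_sum_of_nonneg fun j _ => by positivity

variable [CompleteSpace V] [Fintype ι]

theorem norm_quantization_sub_fockOperator_le (a b : ι → V →L[ℂ] V) (g : (ι →₀ ℕ) →₀ V) :
    ‖ofFinsupp (quantization a b (scale (fun α => degreeWeight α ^ 2) g)) -
      fockOperator a b (ofFinsupp g)‖ ≤ (∑ j, (‖a j‖ + ‖b j‖)) * ‖damping ι V (ofFinsupp g)‖ := by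
  rw [fockOperator_ofFinsupp, ← map_sub]
  have hcomm : quantization a b (scale (fun α => degreeWeight α ^ 2) g) -
      scale degreeWeight (quantization a b (scale degreeWeight g)) =
        ∑ j, (mapFinsupp (a j) (create j (scale (fun α => degreeWeight α ^ 2) g) -
            scale degreeWeight (create j (scale degreeWeight g))) +
          mapFinsupp (b j) (annihilate j (scale (fun α => degreeWeight α ^ 2) g) -
            scale degreeWeight (annihilate j (scale degreeWeight g)))) := by
    simp only [quantization, LinearMap.sum_apply, LinearMap.add_apply, LinearMap.comp_apply,
      map_sum, map_add, map_sub, mapFinsupp_scale, ← Finset.sum_sub_distrib, add_sub_add_comm]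
  simp only [hcomm, map_sum, map_add, ← mapCoeff_ofFinsupp, Finset.sum_mul, add_mul]
  refine norm_sum_le_of_le _ fun j _ => norm_add_le_of_le ?_ ?_
  · exact (norm_mapCoeff_apply_le _ _).trans
      (mul_le_mul_of_nonneg_left (norm_commutator_create_le j g) (norm_nonneg _))
  · exact (norm_mapCoeff_apply_le _ _).trans
      (mul_le_mul_of_nonneg_left (norm_commutator_annihilate_le j g) (norm_nonneg _))

variable [Nonempty ι] {c r : ℝ} {a b : ι → V →L[ℂ] V} {γ : V →L[ℂ] V}

theorem IsElliptic.estimate_ofFinsupp (h : IsElliptic c r a b γ) (g : (ι →₀ ℕ) →₀ V) :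
    c ^ 2 * (‖ofFinsupp g‖ ^ 2 + r ^ 2 * ‖damping ι V (ofFinsupp g)‖ ^ 2) ≤
      (‖(fockOperator a b + mapCoeff _ γ ∘L damping ι V) (ofFinsupp g)‖ +
        2 * (∑ j, (‖a j‖ + ‖b j‖)) * ‖damping ι V (ofFinsupp g)‖) ^ 2 := by
  set K := ∑ j, (‖a j‖ + ‖b j‖)
  set S := fockOperator a b + mapCoeff _ γ ∘L damping ι V with hS
  set p := scale (fun α => degreeWeight α ^ 2) g
  have hp : ofFinsupp p = damping ι V (ofFinsupp g) := (damping_ofFinsupp g).symm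
  have hg : scale (fun α : ι →₀ ℕ => √(α.degree + 1)) p = g := by
    ext α
    simp [p, scale_scale, scale_apply, degreeWeight, sqrt_mul_weight_sq]
  have hlower := norm_ofFinsupp_scale_sqrt_degree_le p
  have hupper : ‖ofFinsupp (quantization a b p + mapFinsupp γ p)‖ ≤
      ‖S (ofFinsupp g)‖ + K * ‖damping ι V (ofFinsupp g)‖ := by
    refine (norm_le_norm_add_norm_sub' _ _).trans (add_le_add_right ?_ _)
    rw [map_add, ← mapCoeff_ofFinsupp, hp, hS, _root_.add_apply, coe_comp, Function.comp_apply,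
      add_sub_add_right_eq_sub]
    exact norm_quantization_sub_fockOperator_le a b g
  have herror : ∑ j, ‖ofFinsupp (mapFinsupp (b j) p)‖ ^ 2 ≤
      (K * ‖damping ι V (ofFinsupp g)‖) ^ 2 := by
    simp only [← mapCoeff_ofFinsupp, hp]
    refine (sum_norm_sq_mapCoeff_le b _).trans ?_
    gcongr
    exact Finset.sum_le_sum fun j _ => le_add_of_nonneg_left (norm_nonneg (a j))
  have hK : 0 ≤ K * ‖damping ι V (ofFinsupp g)‖ := by positivity
  rw [hg] at hlower
  calc c ^ 2 * (‖ofFinsupp g‖ ^ 2 + r ^ 2 * ‖damping ι V (ofFinsupp g)‖ ^ 2)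
      ≤ c ^ 2 * (∑ j, ‖ofFinsupp (create j p)‖ ^ 2 + r ^ 2 * ‖ofFinsupp p‖ ^ 2) := by
        rw [hp]; gcongr
    _ ≤ _ := h.garding_inequality p
    _ ≤ _ := add_le_add (pow_le_pow_left₀ (norm_nonneg _) hupper 2) herror
    _ ≤ (‖S (ofFinsupp g)‖ + 2 * K * ‖damping ι V (ofFinsupp g)‖) ^ 2 := by
        nlinarith [norm_nonneg (S (ofFinsupp g))]

theorem IsElliptic.estimate (h : IsElliptic c r a b γ) (u : lp (fun _ : ι →₀ ℕ => V) 2) :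
    c ^ 2 * (‖u‖ ^ 2 + r ^ 2 * ‖damping ι V u‖ ^ 2) ≤
      (‖(fockOperator a b + mapCoeff _ γ ∘L damping ι V) u‖ +
        2 * (∑ j, (‖a j‖ + ‖b j‖)) * ‖damping ι V u‖) ^ 2 :=
  denseRange_ofFinsupp.induction_on u (isClosed_le (by fun_prop) (by fun_prop))
    h.estimate_ofFinsupp

end Ellipticity

section SupportedOn

variable {I V : Type*} [NormedAddCommGroup V] [InnerProductSpace ℂ V]

/-- The square-summable families that vanish outside `s`. -/
noncomputable def supportedOn (V : Type*) [NormedAddCommGroup V] [InnerProductSpace ℂ V]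
    (s : Set I) : Submodule ℂ (lp (fun _ : I => V) 2) :=
  ⨅ α : ↥sᶜ, (lp.evalCLM ℂ (fun _ : I => V) 2 α).ker

theorem mem_supportedOn {s : Set I} {u : lp (fun _ : I => V) 2} :
    u ∈ supportedOn V s ↔ ∀ α ∉ s, u α = 0 := by
  simp only [supportedOn, Submodule.mem_iInf, Subtype.forall]
  rfl

theorem isClosed_supportedOn (s : Set I) :
    IsClosed (supportedOn V s : Set (lp (fun _ : I => V) 2)) := by
  rw [supportedOn, Submodule.coe_iInf]
  exact isClosed_iInter fun α => ContinuousLinearMap.isClosed_ker _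

instance [CompleteSpace V] (s : Set I) : CompleteSpace (supportedOn V s) :=
  (isClosed_supportedOn s).completeSpace_coe

theorem coFG_supportedOn [FiniteDimensional ℂ V] {s : Set I} (hs : sᶜ.Finite) :
    (supportedOn V s).CoFG := by
  have := hs.to_subtype
  rw [supportedOn, iInf]
  refine Submodule.CoFG.sInf_of_finite (Set.finite_range _) ?_
  rintro _ ⟨α, rfl⟩
  exact .ker _

theorem orthogonal_supportedOn (s : Set I) : (supportedOn V s)ᗮ = supportedOn V sᶜ := by
  classical
  ext u
  refine ⟨fun hu => mem_supportedOn.2 fun α hα => ?_, fun hu => ?_⟩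
  · have hmem : ofFinsupp (single α (u α)) ∈ supportedOn V s := mem_supportedOn.2 fun β hβ => by
      rw [ofFinsupp_apply, single_eq_of_ne]
      rintro rfl
      exact hβ (not_not.1 hα)
    have := Submodule.inner_right_of_mem_orthogonal hmem hu
    rwa [inner_ofFinsupp_single_left, inner_self_eq_zero] at this
  · refine (Submodule.mem_orthogonal _ _).2 fun v hv => ?_
    rw [lp.inner_eq_tsum]
    refine (tsum_congr fun α => ?_).trans tsum_zero
    by_cases hα : α ∈ s
    · rw [mem_supportedOn.1 hu α (not_not.2 hα), inner_zero_right]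
    · rw [mem_supportedOn.1 hv α hα, inner_zero_left]

end SupportedOn

section FredholmProperty

variable {ι V : Type*} [NormedAddCommGroup V] [InnerProductSpace ℂ V]

open Filter Topology

theorem tendsto_weight : Tendsto weight atTop (𝓝 0) := by
  unfold weight
  refine tendsto_inv_atTop_zero.comp
    (Real.tendsto_sqrt_atTop.comp (Real.tendsto_sqrt_atTop.comp ?_))
  exact tendsto_atTop_add_const_right _ _ tendsto_natCast_atTop_atTop

theorem norm_damping_le {M : ℕ} {u : lp (fun _ : ι →₀ ℕ => V) 2}
    (hu : u ∈ supportedOn V {α : ι →₀ ℕ | M ≤ α.degree}) :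
    ‖damping ι V u‖ ≤ weight M ^ 2 * ‖u‖ := by
  rw [← abs_of_nonneg (sq_nonneg (weight M)), ← Real.norm_eq_abs, ← norm_smul]
  refine lp.norm_mono (by simp) fun α => ?_
  rw [damping, diagonal_apply, lp.coeFn_smul, Pi.smul_apply, norm_smul, norm_smul,
    Complex.norm_real]
  by_cases hα : M ≤ α.degree
  · have hpos := weight_pos α.degree
    have hle : weight α.degree ≤ weight M := weight_antitone hα
    simp only [degreeWeight, norm_pow, Real.norm_eq_abs, sq_abs]
    gcongr
  · simp [mem_supportedOn.1 hu α hα]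

theorem adjoint_mapCoeff_comp_damping [CompleteSpace V] (γ : V →L[ℂ] V) :
    adjoint (mapCoeff _ γ ∘L damping ι V) = mapCoeff _ (adjoint γ) ∘L damping ι V := by
  rw [adjoint_comp, adjoint_mapCoeff, damping, adjoint_diagonal]
  ext u α
  simp [diagonal_apply, mapCoeff_apply]

variable [Fintype ι] {c r : ℝ} {a b : ι → V →L[ℂ] V} {γ C : V →L[ℂ] V} [CompleteSpace V]

theorem adjoint_fockOperator_add (a b : ι → V →L[ℂ] V) (γ : V →L[ℂ] V) :
    adjoint (fockOperator a b + mapCoeff _ γ ∘L damping ι V) =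
      fockOperator (fun j => adjoint (b j)) (fun j => adjoint (a j)) +
        mapCoeff _ (adjoint γ) ∘L damping ι V := by
  rw [map_add, adjoint_fockOperator, adjoint_mapCoeff_comp_damping]

theorem IsElliptic.ker_eq_bot [Nonempty ι] (hc : 0 < c) (h : IsElliptic c r a b γ)
    (hr : 2 * ∑ j, (‖a j‖ + ‖b j‖) ≤ c * r) :
    (fockOperator a b + mapCoeff _ γ ∘L damping ι V).ker = ⊥ := by
  refine (Submodule.eq_bot_iff _).2 fun u hu => ?_
  have hestimate := h.estimate u
  rw [show (fockOperator a b + mapCoeff _ γ ∘L damping ι V) u = 0 from hu, norm_zero,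
    zero_add] at hestimate
  have hdamping : (2 * (∑ j, (‖a j‖ + ‖b j‖)) * ‖damping ι V u‖) ^ 2 ≤
      (c * r * ‖damping ι V u‖) ^ 2 := by gcongr
  have hzero : c ^ 2 * ‖u‖ ^ 2 ≤ 0 := by linarith
  simpa using pow_eq_zero_iff two_ne_zero |>.1 <|
    le_antisymm (nonpos_of_mul_nonpos_right hzero (by positivity)) (sq_nonneg ‖u‖)

theorem star_symbol {M : Type*} [AddCommMonoid M] [Module ℂ M] [StarAddMonoid M] [StarModule ℂ M]
    (a b : ι → M) (z : ι → ℂ) :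
    star (symbol a b z) = symbol (fun j => star (b j)) (fun j => star (a j)) z := by
  simp only [symbol, star_sum, star_add, star_smul, ← starRingEnd_apply, Complex.conj_conj]
  exact Finset.sum_congr rfl fun j _ => add_comm _ _

theorem adjoint_symbol (a b : ι → V →L[ℂ] V) (z : ι → ℂ) :
    adjoint (symbol a b z) = symbol (fun j => adjoint (b j)) (fun j => adjoint (a j)) z :=
  star_symbol a b z

theorem norm_adjoint_apply_ge [FiniteDimensional ℂ V] {A : V →L[ℂ] V} {k : ℝ}
    (hA : ∀ x, k * ‖x‖ ≤ ‖A x‖) (x : V) : k * ‖x‖ ≤ ‖adjoint A x‖ := by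
  obtain hk | hk := le_or_gt k 0
  · exact (mul_nonpos_of_nonpos_of_nonneg hk (norm_nonneg x)).trans (norm_nonneg _)
  have hinj : Function.Injective A := (injective_iff_map_eq_zero A).2 fun y hy => by
    have := hA y
    rw [hy, norm_zero] at this
    exact norm_le_zero_iff.1 (nonpos_of_mul_nonpos_right this hk)
  obtain ⟨y, rfl⟩ := (LinearMap.injective_iff_surjective (f := A.toLinearMap)).1 hinj x
  obtain hy | hy := (norm_nonneg (A y)).eq_or_lt
  · rw [coe_coe, ← hy, mul_zero]
    exact norm_nonneg _
  refine le_of_mul_le_mul_right ?_ hy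
  calc k * ‖A y‖ * ‖A y‖ = k * ‖⟪A y, A y⟫_ℂ‖ := by
        rw [inner_self_eq_ofReal_norm_sq, Complex.norm_of_nonneg (sq_nonneg _), sq, mul_assoc]
    _ = k * ‖⟪y, adjoint A (A y)⟫_ℂ‖ := by rw [adjoint_inner_right]
    _ ≤ k * (‖y‖ * ‖adjoint A (A y)‖) := by gcongr; exact norm_inner_le_norm _ _
    _ = k * ‖y‖ * ‖adjoint A (A y)‖ := by ring
    _ ≤ ‖A y‖ * ‖adjoint A (A y)‖ := by gcongr; exact hA y
    _ = ‖adjoint A (A y)‖ * ‖A y‖ := mul_comm _ _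

protected theorem IsElliptic.adjoint [FiniteDimensional ℂ V] (h : IsElliptic c r a b γ) :
    IsElliptic c r (fun j => adjoint (b j)) (fun j => adjoint (a j)) (adjoint γ) := by
  intro z x
  rw [← adjoint_symbol, ← map_add]
  have hsqrt : √(c ^ 2 * (∑ j, ‖z j‖ ^ 2 + r ^ 2)) ^ 2 = c ^ 2 * (∑ j, ‖z j‖ ^ 2 + r ^ 2) :=
    Real.sq_sqrt (by positivity)
  rw [← mul_assoc, ← hsqrt, ← mul_pow]
  refine pow_le_pow_left₀ (by positivity) (norm_adjoint_apply_ge (fun y => ?_) x) 2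
  refine le_of_sq_le_sq ?_ (norm_nonneg _)
  rw [mul_pow, hsqrt, mul_assoc]
  exact h z y

variable [FiniteDimensional ℂ V] [Nonempty ι]

theorem IsElliptic.isUpperSemiFredholm (hc : 0 < c) (h : IsElliptic c r a b γ) :
    IsUpperSemiFredholm (fockOperator a b + mapCoeff _ γ ∘L damping ι V) := by
  set K := ∑ j, (‖a j‖ + ‖b j‖)
  have hlim : Tendsto (fun M => 2 * K * weight M ^ 2) atTop (𝓝 0) := by
    simpa using (tendsto_weight.pow 2).const_mul (2 * K)
  obtain ⟨M, hM⟩ := (hlim.eventually_lt_const hc).exists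
  refine ⟨supportedOn V {α | M ≤ α.degree}, isClosed_supportedOn _,
    coFG_supportedOn ((finite_of_degree_lt M).subset fun α hα => by simpa using hα),
    c - 2 * K * weight M ^ 2, sub_pos.2 hM, fun u hu => ?_⟩
  have hsq : (c * ‖u‖) ^ 2 ≤ (‖(fockOperator a b + mapCoeff _ γ ∘L damping ι V) u‖ +
      2 * K * ‖damping ι V u‖) ^ 2 := by
    refine le_trans ?_ (h.estimate u)
    rw [mul_pow]
    gcongr
    exact le_add_of_nonneg_right (by positivity)
  have hestimate := le_of_sq_le_sq hsq (by positivity)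
  have hdamping : 2 * K * ‖damping ι V u‖ ≤ 2 * K * (weight M ^ 2 * ‖u‖) := by
    gcongr
    exact norm_damping_le hu
  linarith

theorem IsElliptic.isUpperSemiFredholm_adjoint (hc : 0 < c) (h : IsElliptic c r a b γ) :
    IsUpperSemiFredholm
      (adjoint (fockOperator a b + mapCoeff _ γ ∘L damping ι V)) := by
  rw [adjoint_fockOperator_add]
  exact h.adjoint.isUpperSemiFredholm hc

/-- The homotopy `s ↦ T + s C (n + 1) ^ (-1/2)` through Fredholm operators ends at an invertible
one, because the zeroth-order error of the elliptic estimate is absorbed for large `s`. -/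
theorem index_fockOperator_eq_zero (hc : 0 < c)
    (h : ∀ s : ℝ, IsElliptic c s a b ((s : ℂ) • C)) :
    (fockOperator a b).toLinearMap.index = 0 := by
  set S : ℝ → lp (fun _ : ι →₀ ℕ => V) 2 →L[ℂ] lp (fun _ : ι →₀ ℕ => V) 2 := fun s =>
    fockOperator a b + mapCoeff _ ((s : ℂ) • C) ∘L damping ι V with hS
  have hF (s : ℝ) : IsFredholm (S s) :=
    ((h s).isUpperSemiFredholm hc).isFredholm ((h s).isUpperSemiFredholm_adjoint hc)
  have hcont : Continuous S := by
    simp only [hS, mapCoeff_smul, smul_comp]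
    fun_prop
  set s := 2 * (∑ j, (‖a j‖ + ‖b j‖)) / c
  have hcs : c * s = 2 * ∑ j, (‖a j‖ + ‖b j‖) := mul_div_cancel₀ _ hc.ne'
  have hker : (S s).ker = ⊥ := (h s).ker_eq_bot hc hcs.ge
  have hker' : (adjoint (S s)).ker = ⊥ := by
    rw [adjoint_fockOperator_add]
    refine (h s).adjoint.ker_eq_bot hc (hcs.ge.trans_eq' ?_)
    simp only [LinearIsometryEquiv.norm_map, add_comm]
  have hzero : S 0 = fockOperator a b := by
    simp [hS, mapCoeff_zero]
  rw [← hzero, index_eq_of_isFredholm_of_continuous hcont hF 0 s,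
    index_eq_finrank_ker_sub_finrank_ker_adjoint (hF s).isClosed_range, hker, hker']
  simp

end FredholmProperty

section Parity

variable {ι V W : Type*} [NormedAddCommGroup V] [InnerProductSpace ℂ V]
  [NormedAddCommGroup W] [InnerProductSpace ℂ W]

/-- The part of Fock space of even degree. -/
noncomputable abbrev evenDegree (ι V : Type*) [NormedAddCommGroup V] [InnerProductSpace ℂ V] :
    Submodule ℂ (lp (fun _ : ι →₀ ℕ => V) 2) :=
  supportedOn V {α | Even α.degree}

theorem mapCoeff_mem_supportedOn {I : Type*} {s : Set I} {u : lp (fun _ : I => V) 2}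
    (hu : u ∈ supportedOn V s) (A : V →L[ℂ] W) : mapCoeff I A u ∈ supportedOn W s :=
  mem_supportedOn.2 fun α hα => by rw [mapCoeff_apply, mem_supportedOn.1 hu α hα, map_zero]

theorem isOdd_lower (j : ι) : IsOdd (evenDegree ι V) (lower V j) := by
  have hparity (α : ι →₀ ℕ) : Even (α + single j 1).degree ↔ ¬Even α.degree := by
    simp [Nat.even_add_one]
  have hzero {u : lp (fun _ : ι →₀ ℕ => V) 2} {α : ι →₀ ℕ} (hu : u (α + single j 1) = 0) :
      lower V j u α = 0 := by
    simp [lower, diagonal_apply, reindex_apply, hu]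
  rw [IsOdd, evenDegree, orthogonal_supportedOn]
  refine ⟨fun u hu => mem_supportedOn.2 fun α hα => hzero ?_,
    fun u hu => mem_supportedOn.2 fun α hα => hzero ?_⟩
  · exact mem_supportedOn.1 hu _ fun h => (hparity α).1 h (not_not.1 hα)
  · exact mem_supportedOn.1 hu _ (not_not.2 ((hparity α).2 hα))

variable [Fintype ι] [CompleteSpace V]

theorem isOdd_fockOperator (a b : ι → V →L[ℂ] V) : IsOdd (evenDegree ι V) (fockOperator a b) := by
  have hodd (j : ι) := isOdd_lower (V := V) j
  have hodd' (j : ι) := (hodd j).adjoint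
  simp only [IsOdd, evenDegree, orthogonal_supportedOn] at hodd hodd' ⊢
  simp only [fockOperator, _root_.sum_apply, _root_.add_apply, coe_comp, Function.comp_apply]
  exact ⟨fun u hu => sum_mem fun j _ => add_mem (mapCoeff_mem_supportedOn ((hodd' j).1 u hu) _)
      (mapCoeff_mem_supportedOn ((hodd j).1 u hu) _),
    fun u hu => sum_mem fun j _ => add_mem (mapCoeff_mem_supportedOn ((hodd' j).2 u hu) _)
      (mapCoeff_mem_supportedOn ((hodd j).2 u hu) _)⟩

theorem gradedIndex_fockOperator (a b : ι → V →L[ℂ] V) :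
    gradedIndex (evenDegree ι V) (fockOperator a b) =
      finrank ℂ ((fockOperator a b).ker ⊓ evenDegree ι V : Submodule ℂ _) -
        finrank ℂ ((fockOperator (fun j => adjoint (b j)) fun j => adjoint (a j)).ker ⊓
          supportedOn V {α | Even α.degree}ᶜ : Submodule ℂ _) := by
  rw [gradedIndex, orthogonal_supportedOn, adjoint_fockOperator]

end Parity

section Blocks

variable {ι o V W : Type*} [Fintype o] [NormedAddCommGroup V] [InnerProductSpace ℂ V]
  [NormedAddCommGroup W] [InnerProductSpace ℂ W]

/-- `A` is block diagonal with diagonal blocks `A' i`, for the decompositions `Φ` of its source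
and `Φ'` of its target into copies of `W`. -/
def IsBlockDiagonal (Φ Φ' : V ≃ₗᵢ[ℂ] PiLp 2 fun _ : o => W) (A : V →L[ℂ] V)
    (A' : o → W →L[ℂ] W) : Prop :=
  ∀ x i, Φ' (A x) i = A' i (Φ x i)

variable {Φ Φ' : V ≃ₗᵢ[ℂ] PiLp 2 fun _ : o => W}

theorem IsBlockDiagonal.norm_sq_apply {A : V →L[ℂ] V} {A' : o → W →L[ℂ] W}
    (h : IsBlockDiagonal Φ Φ' A A') (x : V) : ‖A x‖ ^ 2 = ∑ i, ‖A' i (Φ x i)‖ ^ 2 := by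
  rw [← Φ'.norm_map, PiLp.norm_sq_eq_of_L2]
  simp only [h x]

protected theorem IsBlockDiagonal.adjoint [CompleteSpace V] [CompleteSpace W] {A : V →L[ℂ] V}
    {A' : o → W →L[ℂ] W} (h : IsBlockDiagonal Φ Φ' A A') :
    IsBlockDiagonal Φ' Φ (adjoint A) fun i => adjoint (A' i) := by
  intro y
  suffices Φ (adjoint A y) = WithLp.toLp 2 fun i => adjoint (A' i) (Φ' y i) from
    fun i => congrArg (· i) this
  refine ext_inner_right ℂ fun w => ?_
  obtain ⟨x, rfl⟩ := Φ.surjective w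
  rw [Φ.inner_map_map, adjoint_inner_left, ← Φ'.inner_map_map, PiLp.inner_apply, PiLp.inner_apply]
  simp only [h x, adjoint_inner_left]

variable [Fintype ι] {a b : ι → V →L[ℂ] V} {a' b' : o → ι → W →L[ℂ] W}

theorem IsBlockDiagonal.symbol (ha : ∀ j, IsBlockDiagonal Φ Φ' (a j) fun i => a' i j)
    (hb : ∀ j, IsBlockDiagonal Φ Φ' (b j) fun i => b' i j) (z : ι → ℂ) :
    IsBlockDiagonal Φ Φ' (symbol a b z) fun i => symbol (a' i) (b' i) z := by
  intro x i
  have hxa (j : ι) := ha j x i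
  have hxb (j : ι) := hb j x i
  simp [HurwitzRadon.symbol, hxa, hxb]

theorem IsElliptic.of_isBlockDiagonal {c : ℝ}
    (h : ∀ i, IsElliptic c 0 (a' i) (b' i) 0)
    (ha : ∀ j, IsBlockDiagonal Φ Φ' (a j) fun i => a' i j)
    (hb : ∀ j, IsBlockDiagonal Φ Φ' (b j) fun i => b' i j) : IsElliptic c 0 a b 0 := by
  intro z x
  rw [add_zero, (IsBlockDiagonal.symbol ha hb z).norm_sq_apply, ← Φ.norm_map, PiLp.norm_sq_eq_of_L2,
    Finset.mul_sum, Finset.mul_sum]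
  exact Finset.sum_le_sum fun i _ => by simpa using h i z (Φ x i)

/-- The `i`-th component of the decomposition `Φ`. -/
noncomputable def component (Φ : V ≃ₗᵢ[ℂ] PiLp 2 fun _ : o => W) (i : o) : V →L[ℂ] W :=
  PiLp.proj 2 (fun _ : o => W) i ∘L Φ.toContinuousLinearEquiv.toContinuousLinearMap

theorem component_apply (i : o) (x : V) : component Φ i x = Φ x i := rfl

theorem ext_mapCoeff_component {I : Type*} {u v : lp (fun _ : I => V) 2}
    (h : ∀ i, mapCoeff I (component Φ i) u = mapCoeff I (component Φ i) v) : u = v := by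
  ext α
  refine Φ.injective (PiLp.ext fun i => ?_)
  exact congrArg (fun w : lp (fun _ : I => W) 2 => w α) (h i)

theorem exists_mapCoeff_component_eq {I : Type*} (Φ : V ≃ₗᵢ[ℂ] PiLp 2 fun _ : o => W)
    (w : o → lp (fun _ : I => W) 2) : ∃ u, ∀ i, mapCoeff I (component Φ i) u = w i := by
  have hmem : Memℓp (fun α => Φ.symm (WithLp.toLp 2 fun i => w i α)) 2 := by
    refine memℓp_gen ?_
    have hsum := summable_sum fun i (_ : i ∈ Finset.univ) =>
      (lp.memℓp (w i)).summable (by simp)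
    refine hsum.congr fun α => ?_
    simp [PiLp.norm_sq_eq_of_L2]
  refine ⟨⟨_, hmem⟩, fun i => lp.ext (funext fun α => ?_)⟩
  rw [mapCoeff_apply, component_apply]
  simp

variable [CompleteSpace V] [CompleteSpace W]

theorem mapCoeff_component_fockOperator
    (ha : ∀ j, IsBlockDiagonal Φ Φ' (a j) fun i => a' i j)
    (hb : ∀ j, IsBlockDiagonal Φ Φ' (b j) fun i => b' i j) (i : o)
    (u : lp (fun _ : ι →₀ ℕ => V) 2) :
    mapCoeff _ (component Φ' i) (fockOperator a b u) =
      fockOperator (a' i) (b' i) (mapCoeff _ (component Φ i) u) := by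
  have hcomp : mapCoeff _ (component Φ' i) ∘L fockOperator a b =
      fockOperator (a' i) (b' i) ∘L mapCoeff _ (component Φ i) :=
    mapCoeff_comp_fockOperator (fun j => ContinuousLinearMap.ext fun x => ha j x i)
      fun j => ContinuousLinearMap.ext fun x => hb j x i
  exact congrArg (· u) hcomp

theorem finrank_ker_fockOperator_inf_supportedOn
    (ha : ∀ j, IsBlockDiagonal Φ Φ' (a j) fun i => a' i j)
    (hb : ∀ j, IsBlockDiagonal Φ Φ' (b j) fun i => b' i j)
    (hfin : ∀ i, FiniteDimensional ℂ (fockOperator (a' i) (b' i)).ker) (s : Set (ι →₀ ℕ)) :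
    finrank ℂ ((fockOperator a b).ker ⊓ supportedOn V s : Submodule ℂ _) =
      ∑ i, finrank ℂ ((fockOperator (a' i) (b' i)).ker ⊓ supportedOn W s : Submodule ℂ _) := by
  have hcomp := mapCoeff_component_fockOperator ha hb
  set K := (fockOperator a b).ker ⊓ supportedOn V s
  set K' := fun i => (fockOperator (a' i) (b' i)).ker ⊓ supportedOn W s
  have (i : o) : FiniteDimensional ℂ (K' i) := Submodule.finiteDimensional_inf_left _ _
  have hmaps (i : o) (u : lp (fun _ : ι →₀ ℕ => V) 2) (hu : u ∈ K) :
      mapCoeff _ (component Φ i) u ∈ K' i := by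
    refine ⟨?_, mapCoeff_mem_supportedOn hu.2 _⟩
    have hker : fockOperator a b u = 0 := hu.1
    exact (hcomp i u).symm.trans (by rw [hker, map_zero])
  set F : K →ₗ[ℂ] ∀ i, K' i := LinearMap.pi fun i =>
    (mapCoeff _ (component Φ i)).toLinearMap.restrict (hmaps i)
  have hF : Function.Bijective F := by
    refine ⟨fun u v huv => Subtype.ext (ext_mapCoeff_component (Φ := Φ) fun i => ?_), fun w => ?_⟩
    · exact congrArg Subtype.val (congrFun huv i)
    · obtain ⟨u, hu⟩ := exists_mapCoeff_component_eq Φ fun i => (w i : lp (fun _ : ι →₀ ℕ => W) 2)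
      have hker : fockOperator a b u = 0 := ext_mapCoeff_component (Φ := Φ') fun i => by
        rw [hcomp, hu, map_zero]
        exact (w i).2.1
      have hsupp : u ∈ supportedOn V s := mem_supportedOn.2 fun α hα =>
        Φ.injective <| PiLp.ext fun i => by
          rw [← component_apply, ← mapCoeff_apply, hu, mem_supportedOn.1 (w i).2.2 α hα, map_zero]
          rfl
      exact ⟨⟨u, hker, hsupp⟩, funext fun i => Subtype.ext (hu i)⟩
  rw [(LinearEquiv.ofBijective F hF).finrank_eq, finrank_pi_fintype]

theorem gradedIndex_fockOperator_eq_sum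
    (ha : ∀ j, IsBlockDiagonal Φ Φ' (a j) fun i => a' i j)
    (hb : ∀ j, IsBlockDiagonal Φ Φ' (b j) fun i => b' i j)
    (hfin : ∀ i, FiniteDimensional ℂ (fockOperator (a' i) (b' i)).ker)
    (hfin' : ∀ i, FiniteDimensional ℂ (adjoint (fockOperator (a' i) (b' i))).ker) :
    gradedIndex (evenDegree ι V) (fockOperator a b) =
      ∑ i, gradedIndex (evenDegree ι W) (fockOperator (a' i) (b' i)) := by
  have hfin_adjoint (i : o) : FiniteDimensional ℂ
      (fockOperator (fun j => adjoint (b' i j)) fun j => adjoint (a' i j)).ker := by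
    rw [← adjoint_fockOperator]
    exact hfin' i
  simp only [gradedIndex_fockOperator]
  rw [finrank_ker_fockOperator_inf_supportedOn ha hb hfin,
    finrank_ker_fockOperator_inf_supportedOn (fun j => (hb j).adjoint) (fun j => (ha j).adjoint)
      hfin_adjoint]
  push_cast
  rw [Finset.sum_sub_distrib]

end Blocks

end FockSpace

section Anticommutation

/-- The canonical anticommutation relations for a family `e` of annihilation operators and the
family `star ∘ e` of creation operators. -/
structure IsCAR {ι R : Type*} [DecidableEq ι] [Ring R] [StarRing R] (e : ι → R) : Prop where
  mul_add_mul : ∀ i j, e i * e j + e j * e i = 0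
  mul_star_add : ∀ i j, e i * star (e j) + star (e j) * e i = if i = j then 1 else 0

section Map

variable {ι R S F : Type*} [DecidableEq ι] [Ring R] [StarRing R] [Ring S] [StarRing S]
  [FunLike F R S] [RingHomClass F R S] [StarHomClass F R S]

protected theorem IsCAR.map {e : ι → R} (he : IsCAR e) (f : F) : IsCAR fun i => f (e i) where
  mul_add_mul i j := by rw [← map_mul, ← map_mul, ← map_add, he.mul_add_mul, map_zero]
  mul_star_add i j := by
    rw [← map_star, ← map_mul, ← map_mul, ← map_add, he.mul_star_add, apply_ite f, map_one,
      map_zero]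

theorem IsCAR.star_mul_star_add {e : ι → R} (he : IsCAR e) (i j : ι) :
    star (e i) * star (e j) + star (e j) * star (e i) = 0 := by
  rw [← star_mul, ← star_mul, ← star_add, he.mul_add_mul, star_zero]

end Map

variable {ι R : Type*} [Fintype ι] [Ring R] [Algebra ℂ R]

theorem sum_sum_mul_mul_eq_zero {e x : ι → R} (he : ∀ i j, e i * e j + e j * e i = 0)
    (hx : ∀ i j, Commute (x i) (x j)) (hex : ∀ i j, Commute (e i) (x j)) :
    ∑ i, ∑ j, e i * x i * (e j * x j) = 0 := by
  have hterm (i j : ι) : e i * x i * (e j * x j) = -(e j * x j * (e i * x i)) := by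
    rw [(hex j i).symm.mul_mul_mul_comm, (hex i j).symm.mul_mul_mul_comm, (hx i j).eq,
      eq_neg_of_add_eq_zero_left (he i j), neg_mul]
  have := IsAddTorsionFree.of_isTorsionFree ℂ R
  refine self_eq_neg.1 ?_
  conv_rhs => rw [Finset.sum_comm]
  simp only [← Finset.sum_neg_distrib, ← hterm]

/-- The square of a Koszul-type operator, for bosonic variables `x`, `y` with `[y i, x i] = h`:
`h = 0` is the case of commuting variables and `h = 1` that of the harmonic oscillator. -/
theorem sum_mul_add_mul_mul_self [DecidableEq ι] {e f x y : ι → R} {h : R}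
    (hee : ∀ i j, e i * e j + e j * e i = 0) (hff : ∀ i j, f i * f j + f j * f i = 0)
    (hef : ∀ i j, e i * f j + f j * e i = if i = j then 1 else 0)
    (hxx : ∀ i j, Commute (x i) (x j)) (hyy : ∀ i j, Commute (y i) (y j))
    (hyx : ∀ i j, y i * x j = x j * y i + if i = j then h else 0)
    (hex : ∀ i j, Commute (e i) (x j)) (hey : ∀ i j, Commute (e i) (y j))
    (hfx : ∀ i j, Commute (f i) (x j)) (hfy : ∀ i j, Commute (f i) (y j)) :
    (∑ j, (e j * x j + f j * y j)) * ∑ j, (e j * x j + f j * y j) =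
      ∑ j, x j * y j + (∑ j, f j * e j) * h := by
  have hmixed (i j : ι) : e i * x i * (f j * y j) + f j * y j * (e i * x i) =
      if i = j then x i * y j + f j * e i * h else 0 := by
    rw [(hfx j i).symm.mul_mul_mul_comm, (hey i j).symm.mul_mul_mul_comm, hyx, mul_add, ← add_assoc,
      ← add_mul, hef]
    obtain rfl | hij := eq_or_ne i j
    · simp
    · simp [hij, hij.symm]
  calc (∑ j, (e j * x j + f j * y j)) * ∑ j, (e j * x j + f j * y j)
      = ∑ i, ∑ j, e i * x i * (e j * x j) + ∑ i, ∑ j, f i * y i * (f j * y j) +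
          ∑ i, ∑ j, (e i * x i * (f j * y j) + f j * y j * (e i * x i)) := by
        simp only [Finset.sum_add_distrib, add_mul, mul_add, Finset.sum_mul_sum]
        rw [Finset.sum_comm (f := fun i j => f j * y j * (e i * x i))]
        abel
    _ = ∑ j, x j * y j + (∑ j, f j * e j) * h := by
        rw [sum_sum_mul_mul_eq_zero hee hxx hex, sum_sum_mul_mul_eq_zero hff hyy hfy]
        simp [hmixed, Finset.sum_add_distrib, Finset.sum_mul]

open scoped ComplexConjugate in
theorem IsCAR.symbol_mul_self [DecidableEq ι] [StarRing R] {e : ι → R} (he : IsCAR e) (z : ι → ℂ) :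
    symbol e (fun j => star (e j)) z * symbol e (fun j => star (e j)) z =
      ((∑ j, ‖z j‖ ^ 2 : ℝ) : ℂ) • 1 := by
  have hsq := sum_mul_add_mul_mul_self (x := fun j => algebraMap ℂ R (z j))
    (y := fun j => algebraMap ℂ R (conj (z j))) (h := 0) he.mul_add_mul he.star_mul_star_add
    he.mul_star_add (fun i j => Algebra.commutes _ _) (fun i j => Algebra.commutes _ _)
    (fun i j => by rw [ite_self, add_zero, Algebra.commutes])
    (fun i j => (Algebra.commutes _ _).symm) (fun i j => (Algebra.commutes _ _).symm)
    (fun i j => (Algebra.commutes _ _).symm) fun i j => (Algebra.commutes _ _).symm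
  have hright (r : ℂ) (a : R) : a * algebraMap ℂ R r = r • a := by
    rw [← Algebra.commutes, Algebra.smul_def]
  simp only [hright] at hsq
  rw [symbol, hsq, mul_zero, add_zero]
  simp only [Algebra.algebraMap_eq_smul_one, smul_smul, Complex.conj_mul', ← Finset.sum_smul]
  push_cast
  rfl

end Anticommutation

section Fermions

open Module

variable {m : ℕ} {Λ : Type*} [Fintype Λ] [DecidableEq Λ]

/-- One more annihilation operator on a doubled state space; the sign on the second copy makes it
anticommute with the old ones. -/
def consFermion (e : Fin m → Matrix Λ Λ ℂ) : Fin (m + 1) → Matrix (Λ ⊕ Λ) (Λ ⊕ Λ) ℂ :=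
  Fin.cons (fromBlocks 0 0 1 0) fun j => fromBlocks (e j) 0 0 (-e j)

theorem IsCAR.consFermion {e : Fin m → Matrix Λ Λ ℂ} (he : IsCAR e) :
    IsCAR (consFermion e) where
  mul_add_mul i j := by
    cases i using Fin.cases <;> cases j using Fin.cases <;>
      simp [HurwitzRadon.consFermion, fromBlocks_multiply, fromBlocks_add, he.mul_add_mul]
  mul_star_add i j := by
    have hstar := he.mul_star_add
    simp only [star_eq_conjTranspose] at hstar
    cases i using Fin.cases <;> cases j using Fin.cases <;>
      simp [HurwitzRadon.consFermion, fromBlocks_multiply, fromBlocks_conjTranspose, fromBlocks_add,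
        star_eq_conjTranspose, hstar, Fin.succ_ne_zero, (Fin.succ_ne_zero _).symm]
    split_ifs <;> simp

/-- A self-adjoint involution that anticommutes with every `e j`. -/
structure IsGrading {ι : Type*} (ε : Matrix Λ Λ ℂ) (e : ι → Matrix Λ Λ ℂ) : Prop where
  conjTranspose_eq : εᴴ = ε
  mul_self : ε * ε = 1
  mul_add_mul : ∀ j, ε * e j + e j * ε = 0

theorem IsGrading.consFermion {e : Fin m → Matrix Λ Λ ℂ} {ε : Matrix Λ Λ ℂ} (hε : IsGrading ε e) :
    IsGrading (fromBlocks ε 0 0 (-ε)) (consFermion e) where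
  conjTranspose_eq := by simp [fromBlocks_conjTranspose, hε.conjTranspose_eq]
  mul_self := by simp [fromBlocks_multiply, hε.mul_self]
  mul_add_mul j := by
    cases j using Fin.cases <;>
      simp [HurwitzRadon.consFermion, fromBlocks_multiply, fromBlocks_add, hε.mul_add_mul]

/-- The vectors killed by all annihilation operators. -/
def vacuum {ι : Type*} (e : ι → Matrix Λ Λ ℂ) : Submodule ℂ (Λ → ℂ) :=
  ⨅ j, (e j).mulVecLin.ker

/-- The second copy of the state space in its double. -/
def inrState (Λ : Type*) : (Λ → ℂ) →ₗ[ℂ] (Λ ⊕ Λ → ℂ) :=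
  (LinearEquiv.sumArrowLequivProdArrow Λ Λ ℂ ℂ).symm.toLinearMap ∘ₗ LinearMap.inr ℂ (Λ → ℂ) (Λ → ℂ)

theorem vacuum_consFermion (e : Fin m → Matrix Λ Λ ℂ) :
    vacuum (consFermion e) = (vacuum e).map (inrState Λ) := by
  have hinr (w : Λ → ℂ) : inrState Λ w = Sum.elim (0 : Λ → ℂ) w := rfl
  have helim (x y : Λ → ℂ) : Sum.elim x y = 0 ↔ x = 0 ∧ y = 0 := by
    simp [funext_iff]
  ext x
  obtain ⟨y, w, rfl⟩ : ∃ y w : Λ → ℂ, x = Sum.elim y w := ⟨_, _, (Sum.elim_comp_inl_inr x).symm⟩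
  simp only [vacuum, Submodule.mem_iInf, LinearMap.mem_ker, mulVecLin_apply, Fin.forall_fin_succ,
    consFermion, Fin.cons_zero, Fin.cons_succ, fromBlocks_mulVec, Sum.elim_comp_inl,
    Sum.elim_comp_inr, Submodule.mem_map, hinr, zero_mulVec, one_mulVec, neg_mulVec, add_zero,
    zero_add, helim, neg_eq_zero, true_and, Sum.elim_eq_iff]
  exact ⟨fun h => ⟨w, fun j => (h.2 j).2, h.1.symm, rfl⟩, by
    rintro ⟨w, hw, rfl, rfl⟩
    simpa using hw⟩

theorem finrank_vacuum_consFermion (e : Fin m → Matrix Λ Λ ℂ) :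
    finrank ℂ (vacuum (consFermion e)) = finrank ℂ (vacuum e) := by
  have hinj : Function.Injective (inrState Λ) :=
    (LinearEquiv.sumArrowLequivProdArrow Λ Λ ℂ ℂ).symm.injective.comp LinearMap.inr_injective
  rw [vacuum_consFermion, ← (Submodule.equivMapOfInjective _ hinj _).finrank_eq]

theorem exists_isCAR (m : ℕ) : ∃ (Λ : Type) (_ : Fintype Λ) (_ : DecidableEq Λ)
    (e : Fin m → Matrix Λ Λ ℂ) (ε : Matrix Λ Λ ℂ), Fintype.card Λ = 2 ^ m ∧ IsCAR e ∧
      IsGrading ε e ∧ finrank ℂ (vacuum e) = 1 := by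
  induction m with
  | zero =>
    refine ⟨Unit, inferInstance, inferInstance, Fin.elim0, 1, by simp, ⟨nofun, nofun⟩,
      ⟨by simp, by simp, nofun⟩, ?_⟩
    rw [vacuum, iInf_of_empty, finrank_top, finrank_fintype_fun_eq_card, Fintype.card_unit]
  | succ m ih =>
    obtain ⟨Λ, _, _, e, ε, hcard, he, hε, hvac⟩ := ih
    refine ⟨Λ ⊕ Λ, inferInstance, inferInstance, consFermion e, fromBlocks ε 0 0 (-ε), ?_,
      he.consFermion, hε.consFermion, (finrank_vacuum_consFermion e).trans hvac⟩
    rw [Fintype.card_sum, hcard, pow_succ, mul_two]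

end Fermions

section FockIndex

open ContinuousLinearMap Module Finsupp
open scoped InnerProductSpace

section Homotopy

variable {ι V : Type*} [Fintype ι] [NormedAddCommGroup V] [InnerProductSpace ℂ V] {c : ℝ}
  {a b a' b' : ι → V →L[ℂ] V}

theorem IsElliptic.cos_smul_add_sin_smul (h : IsElliptic c 0 a b 0) (h' : IsElliptic c 0 a' b' 0)
    (horth : ∀ z x, (⟪symbol a b z x, symbol a' b' z x⟫_ℂ).re = 0) (θ : ℝ) :
    IsElliptic c 0 ((Real.cos θ : ℂ) • a + (Real.sin θ : ℂ) • a')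
      ((Real.cos θ : ℂ) • b + (Real.sin θ : ℂ) • b') 0 := by
  intro z x
  have hx := h z x
  have hx' := h' z x
  set S := symbol a b z x with hS
  set S' := symbol a' b' z x with hS'
  have hsymbol : (symbol ((Real.cos θ : ℂ) • a + (Real.sin θ : ℂ) • a')
      ((Real.cos θ : ℂ) • b + (Real.sin θ : ℂ) • b') z + 0) x =
      (Real.cos θ : ℂ) • S + (Real.sin θ : ℂ) • S' := by
    simp only [hS, hS', symbol, add_zero, Pi.add_apply, Pi.smul_apply, _root_.sum_apply,
      _root_.add_apply, _root_.smul_apply, Finset.smul_sum, ← Finset.sum_add_distrib]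
    exact Finset.sum_congr rfl fun j _ => by module
  have hpythagoras : ‖(Real.cos θ : ℂ) • S + (Real.sin θ : ℂ) • S'‖ ^ 2 =
      Real.cos θ ^ 2 * ‖S‖ ^ 2 + Real.sin θ ^ 2 * ‖S'‖ ^ 2 := by
    rw [@norm_add_sq ℂ, inner_smul_left, inner_smul_right, Complex.conj_ofReal,
      RCLike.re_eq_complex_re, Complex.re_ofReal_mul, Complex.re_ofReal_mul, horth]
    simp only [norm_smul, mul_pow, Complex.norm_real, Real.norm_eq_abs, sq_abs, mul_zero, add_zero]
  rw [hsymbol, hpythagoras]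
  rw [add_zero] at hx hx'
  calc _ = Real.cos θ ^ 2 * (c ^ 2 * ((∑ j, ‖z j‖ ^ 2 + 0 ^ 2) * ‖x‖ ^ 2)) +
        Real.sin θ ^ 2 * (c ^ 2 * ((∑ j, ‖z j‖ ^ 2 + 0 ^ 2) * ‖x‖ ^ 2)) := by
        rw [← add_mul, Real.cos_sq_add_sin_sq, one_mul]
    _ ≤ _ := by gcongr

variable [Nonempty ι] [CompleteSpace V] [FiniteDimensional ℂ V]

theorem IsElliptic.isUpperSemiFredholm_fockOperator (hc : 0 < c) (h : IsElliptic c 0 a b 0) :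
    IsUpperSemiFredholm (fockOperator a b) := by
  simpa [mapCoeff_zero] using h.isUpperSemiFredholm hc

theorem IsElliptic.isUpperSemiFredholm_adjoint_fockOperator (hc : 0 < c)
    (h : IsElliptic c 0 a b 0) : IsUpperSemiFredholm (adjoint (fockOperator a b)) := by
  simpa [mapCoeff_zero] using h.isUpperSemiFredholm_adjoint hc

theorem gradedIndex_fockOperator_eq_of_orthogonal (hc : 0 < c) (h : IsElliptic c 0 a b 0)
    (h' : IsElliptic c 0 a' b' 0)
    (horth : ∀ z x, (⟪symbol a b z x, symbol a' b' z x⟫_ℂ).re = 0) :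
    gradedIndex (evenDegree ι V) (fockOperator a b) =
      gradedIndex (evenDegree ι V) (fockOperator a' b') := by
  set T : ℝ → lp (fun _ : ι →₀ ℕ => V) 2 →L[ℂ] lp (fun _ : ι →₀ ℕ => V) 2 := fun θ =>
    fockOperator ((Real.cos θ : ℂ) • a + (Real.sin θ : ℂ) • a')
      ((Real.cos θ : ℂ) • b + (Real.sin θ : ℂ) • b') with hT
  have helliptic := h.cos_smul_add_sin_smul h' horth
  have hcont : Continuous T := by
    simp only [hT, fockOperator_add, fockOperator_smul]
    fun_prop
  have hindex := gradedIndex_eq_of_continuous hcont (fun θ => isOdd_fockOperator _ _)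
    (fun θ => (helliptic θ).isUpperSemiFredholm_fockOperator hc)
    (fun θ => (helliptic θ).isUpperSemiFredholm_adjoint_fockOperator hc) 0 (Real.pi / 2)
  simpa [hT] using hindex

end Homotopy

section Koszul

variable {ι V : Type*} [NormedAddCommGroup V] [InnerProductSpace ℂ V]

theorem scale_single {I : Type*} (φ : I → ℝ) (α : I) (v : V) :
    scale φ (single α v) = single α ((φ α : ℂ) • v) := by
  simp [scale]

theorem annihilate_single_zero (j : ι) (v : V) : annihilate j (single 0 v) = 0 := by
  ext α
  have hne : α + single j 1 ≠ 0 := fun h => by simpa using DFunLike.congr_fun h j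
  rw [annihilate_apply, single_eq_of_ne hne, smul_zero, Finsupp.zero_apply]

theorem mapFinsupp_zero : (mapFinsupp (0 : V →L[ℂ] V) : End ℂ ((ι →₀ ℕ) →₀ V)) = 0 :=
  LinearMap.ext fun _ => Finsupp.ext fun _ => rfl

theorem mapFinsupp_one : (mapFinsupp (1 : V →L[ℂ] V) : End ℂ ((ι →₀ ℕ) →₀ V)) = 1 :=
  LinearMap.ext fun _ => Finsupp.ext fun _ => rfl

theorem annihilate_mul_create [DecidableEq ι] (i j : ι) :
    (annihilate i * create j : End ℂ ((ι →₀ ℕ) →₀ V)) =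
      create j * annihilate i + if i = j then 1 else 0 := by
  obtain rfl | hij := eq_or_ne i j
  · rw [if_pos rfl]
    refine LinearMap.ext fun g => ?_
    simp only [Module.End.mul_apply, LinearMap.add_apply, Module.End.one_apply,
      annihilate_create_self]
  · rw [if_neg hij, add_zero]
    refine LinearMap.ext fun g => ?_
    simp only [Module.End.mul_apply, annihilate_create_of_ne hij]

variable [Fintype ι] [CompleteSpace V]

theorem adjoint_fockOperator_adjoint (e : ι → V →L[ℂ] V) :
    adjoint (fockOperator e fun j => adjoint (e j)) = fockOperator e fun j => adjoint (e j) := by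
  simp only [adjoint_fockOperator, adjoint_adjoint]

variable [DecidableEq ι] {e : ι → V →L[ℂ] V}

theorem IsCAR.isElliptic (he : IsCAR e) : IsElliptic 1 0 e (fun j => adjoint (e j)) 0 := by
  intro z x
  set S := symbol e (fun j => adjoint (e j)) z with hS
  have hadjoint : adjoint S = S := by
    rw [hS, adjoint_symbol]
    simp
  have hsq : S * S = ((∑ j, ‖z j‖ ^ 2 : ℝ) : ℂ) • 1 := he.symbol_mul_self z
  have hnorm : ‖S x‖ ^ 2 = (∑ j, ‖z j‖ ^ 2) * ‖x‖ ^ 2 := by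
    rw [← Complex.ofReal_inj, ← inner_self_eq_ofReal_norm_sq, ← adjoint_inner_right, hadjoint,
      ← mul_apply_eq_comp, hsq, _root_.smul_apply, one_apply_eq_self, inner_smul_right,
      inner_self_eq_ofReal_norm_sq, Complex.ofReal_mul]
  simp [hnorm]

theorem IsCAR.quantization_mul_quantization (he : IsCAR e) :
    (quantization e (fun j => adjoint (e j)) * quantization e fun j => adjoint (e j) :
        End ℂ ((ι →₀ ℕ) →₀ V)) =
      ∑ j, create j * annihilate j + ∑ j, mapFinsupp (adjoint (e j)) * mapFinsupp (e j) := by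
  have hmap (A B : V →L[ℂ] V) : (mapFinsupp A * mapFinsupp B + mapFinsupp B * mapFinsupp A :
      End ℂ ((ι →₀ ℕ) →₀ V)) = mapFinsupp (A * B + B * A) :=
    LinearMap.ext fun g => Finsupp.ext fun β => rfl
  have hmap_ite (i j : ι) : (mapFinsupp (if i = j then 1 else 0 : V →L[ℂ] V) :
      End ℂ ((ι →₀ ℕ) →₀ V)) = if i = j then 1 else 0 := by
    split_ifs
    exacts [mapFinsupp_one, mapFinsupp_zero]
  have hcreate (i j : ι) : Commute (create i : End ℂ ((ι →₀ ℕ) →₀ V)) (create j) :=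
    LinearMap.ext fun g => by simp only [Module.End.mul_apply, create_comm i j g]
  have hannihilate (i j : ι) : Commute (annihilate i : End ℂ ((ι →₀ ℕ) →₀ V)) (annihilate j) :=
    LinearMap.ext fun g => by simp only [Module.End.mul_apply, annihilate_comm i j g]
  have hmap_create (A : V →L[ℂ] V) (j : ι) :
      Commute (mapFinsupp A : End ℂ ((ι →₀ ℕ) →₀ V)) (create j) :=
    LinearMap.ext fun g => by simp only [Module.End.mul_apply, create_mapFinsupp]
  have hmap_annihilate (A : V →L[ℂ] V) (j : ι) :
      Commute (mapFinsupp A : End ℂ ((ι →₀ ℕ) →₀ V)) (annihilate j) :=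
    LinearMap.ext fun g => by simp only [Module.End.mul_apply, annihilate_mapFinsupp]
  have hstar := he.star_mul_star_add
  have hmul_star := he.mul_star_add
  simp only [star_eq_adjoint] at hstar hmul_star
  have hsq := sum_mul_add_mul_mul_self (R := End ℂ ((ι →₀ ℕ) →₀ V))
    (e := fun j => mapFinsupp (e j)) (f := fun j => mapFinsupp (adjoint (e j)))
    (x := create) (y := annihilate) (h := 1)
    (fun i j => by rw [hmap, he.mul_add_mul, mapFinsupp_zero])
    (fun i j => by rw [hmap, hstar, mapFinsupp_zero])
    (fun i j => by rw [hmap, hmul_star, hmap_ite])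
    hcreate hannihilate annihilate_mul_create
    (fun i j => hmap_create _ _) (fun i j => hmap_annihilate _ _)
    (fun i j => hmap_create _ _) (fun i j => hmap_annihilate _ _)
  rwa [mul_one] at hsq

theorem IsCAR.quantization_quantization_single (he : IsCAR e) (α : ι →₀ ℕ) (v : V) :
    quantization e (fun j => adjoint (e j)) (quantization e (fun j => adjoint (e j)) (single α v)) =
      single α ((α.degree : ℂ) • v + ∑ j, adjoint (e j) (e j v)) := by
  refine (LinearMap.congr_fun he.quantization_mul_quantization (single α v)).trans ?_
  simp only [LinearMap.add_apply, LinearMap.sum_apply, Module.End.mul_apply, sum_create_annihilate]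
  ext β
  obtain rfl | hβ := eq_or_ne β α
  · simp [scale_apply, mapFinsupp_apply]
  · simp [scale_apply, mapFinsupp_apply, single_eq_of_ne hβ]

theorem IsCAR.degree_mul_norm_sq_add_sum (he : IsCAR e) {u : lp (fun _ : ι →₀ ℕ => V) 2}
    (hu : fockOperator e (fun j => adjoint (e j)) u = 0) (α : ι →₀ ℕ) :
    α.degree * ‖u α‖ ^ 2 + ∑ j, ‖e j (u α)‖ ^ 2 = 0 := by
  set T := fockOperator e fun j => adjoint (e j) with hT
  set w := (α.degree : ℂ) • u α + ∑ j, adjoint (e j) (e j (u α))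
  set g := scale (fun β => (degreeWeight β)⁻¹)
    (quantization e (fun j => adjoint (e j)) (single α (u α))) with hg
  have hweight (β : ι →₀ ℕ) : degreeWeight β ≠ 0 := (weight_pos _).ne'
  have hscale : scale degreeWeight g =
      quantization e (fun j => adjoint (e j)) (single α (u α)) := by
    ext β
    rw [hg, scale_apply, scale_apply, smul_smul, ← Complex.ofReal_mul, mul_inv_cancel₀ (hweight β),
      Complex.ofReal_one, one_smul]
  have hTg : T (ofFinsupp g) = ofFinsupp (single α ((degreeWeight α : ℂ) • w)) := by
    rw [hT, fockOperator_ofFinsupp, hscale, he.quantization_quantization_single,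
      scale_single]
  have hw : ⟪w, u α⟫_ℂ = 0 := by
    have hinner : ⟪T (ofFinsupp g), u⟫_ℂ = 0 := by
      rw [hT, ← adjoint_fockOperator_adjoint, adjoint_inner_left, hu, inner_zero_right]
    rw [hTg, inner_ofFinsupp_single_left, inner_smul_left] at hinner
    exact (mul_eq_zero.1 hinner).resolve_left (by simpa using hweight α)
  rw [← Complex.ofReal_inj, Complex.ofReal_zero, ← hw, inner_add_left, sum_inner, inner_smul_left]
  simp only [adjoint_inner_left, inner_self_eq_ofReal_norm_sq]
  push_cast
  simp

theorem IsCAR.ker_fockOperator (he : IsCAR e) :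
    (fockOperator e fun j => adjoint (e j)).ker =
      (⨅ j, (e j).ker).map (ofFinsupp ∘ₗ lsingle (0 : ι →₀ ℕ)) := by
  ext u
  simp only [Submodule.mem_map, Submodule.mem_iInf, LinearMap.mem_ker, LinearMap.comp_apply,
    lsingle_apply, coe_coe]
  refine ⟨fun hu => ⟨u 0, fun j => ?_, ?_⟩, ?_⟩
  · have hsum := he.degree_mul_norm_sq_add_sum hu 0
    rw [map_zero, Nat.cast_zero, zero_mul, zero_add,
      Finset.sum_eq_zero_iff_of_nonneg fun _ _ => sq_nonneg _] at hsum
    simpa using hsum j (Finset.mem_univ j)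
  · refine lp.ext (funext fun α => ?_)
    rw [ofFinsupp_apply]
    obtain rfl | hα := eq_or_ne α 0
    · simp
    · have hdegree : (0 : ℝ) < α.degree := by
        simpa [Nat.pos_iff_ne_zero, degree_eq_zero_iff] using hα
      have hsum := he.degree_mul_norm_sq_add_sum hu α
      have hnonneg : 0 ≤ ∑ j, ‖e j (u α)‖ ^ 2 := by positivity
      have hnorm : ‖u α‖ ^ 2 = 0 := by nlinarith [sq_nonneg ‖u α‖]
      rw [single_eq_of_ne hα, norm_eq_zero.1 (pow_eq_zero_iff two_ne_zero |>.1 hnorm)]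
  · rintro ⟨v, hv, rfl⟩
    have hquant : quantization e (fun j => adjoint (e j)) (single 0 v) = 0 := by
      simp only [quantization, LinearMap.sum_apply, LinearMap.add_apply, LinearMap.comp_apply,
        annihilate_single_zero, ← create_mapFinsupp, map_zero, add_zero]
      exact Finset.sum_eq_zero fun j _ => by simp [mapFinsupp, hv]
    rw [fockOperator_ofFinsupp, scale_single, ← Finsupp.smul_single, map_smul, hquant, smul_zero,
      map_zero, map_zero]

theorem IsCAR.gradedIndex_fockOperator (he : IsCAR e) :
    gradedIndex (evenDegree ι V) (fockOperator e fun j => adjoint (e j)) =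
      finrank ℂ (⨅ j, (e j).ker : Submodule ℂ V) := by
  have hinj : Function.Injective (ofFinsupp ∘ₗ lsingle (R := ℂ) (M := V) (0 : ι →₀ ℕ)) :=
    fun v w hvw => by simpa [ofFinsupp_apply] using congrArg (fun u => u 0) hvw
  have hle : (fockOperator e fun j => adjoint (e j)).ker ≤ evenDegree ι V := by
    rw [he.ker_fockOperator, Submodule.map_le_iff_le_comap]
    refine fun v _ => mem_supportedOn.2 fun α hα => single_eq_of_ne ?_
    rintro rfl
    exact hα (by simp)
  have hodd : (fockOperator e fun j => adjoint (e j)).ker ⊓ (evenDegree ι V)ᗮ = ⊥ :=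
    (Submodule.orthogonal_disjoint _ |>.mono_left hle).eq_bot
  rw [gradedIndex, adjoint_fockOperator_adjoint, hodd, inf_eq_left.2 hle, he.ker_fockOperator,
    finrank_bot, ← (Submodule.equivMapOfInjective _ hinj _).finrank_eq, Nat.cast_zero, sub_zero]

end Koszul
end FockIndex

section MatrixSymbols

open ContinuousLinearMap Module
open scoped InnerProductSpace Kronecker

section Index

variable {ι τ κ o : Type*} [Fintype ι] [Fintype τ] [DecidableEq τ] [Fintype κ] [DecidableEq κ]
  [Fintype o]

theorem map_symbol {M M' F : Type*} [AddCommMonoid M] [Module ℂ M] [AddCommMonoid M'] [Module ℂ M']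
    [FunLike F M M'] [LinearMapClass F ℂ M M'] (f : F) (a b : ι → M) (z : ι → ℂ) :
    f (symbol a b z) = symbol (fun j => f (a j)) (fun j => f (b j)) z := by
  simp only [symbol, map_sum, map_add, map_smul]

/-- `IsElliptic` for a symbol with matrix coefficients and no constant term. -/
def IsEllipticMatrix (c : ℝ) (a b : ι → Matrix τ τ ℂ) : Prop :=
  IsElliptic c 0 (fun j => toEuclideanCLM (𝕜 := ℂ) (a j)) (fun j => toEuclideanCLM (𝕜 := ℂ) (b j)) 0

/-- The graded index of the quantisation of a symbol with matrix coefficients. -/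
noncomputable def symbolIndex (a b : ι → Matrix τ τ ℂ) : ℤ :=
  gradedIndex (evenDegree ι (EuclideanSpace ℂ τ))
    (fockOperator (fun j => toEuclideanCLM (𝕜 := ℂ) (a j)) fun j => toEuclideanCLM (𝕜 := ℂ) (b j))

/-- The splitting of `ℂ^τ` into copies of `ℂ^κ` along a bijection `κ × o ≃ τ`. -/
noncomputable def splitting (e : κ × o ≃ τ) :
    EuclideanSpace ℂ τ ≃ₗᵢ[ℂ] PiLp 2 fun _ : o => EuclideanSpace ℂ κ where
  toFun x := WithLp.toLp 2 fun i => WithLp.toLp 2 fun k => x (e (k, i))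
  invFun y := WithLp.toLp 2 fun t => y (e.symm t).2 (e.symm t).1
  map_add' _ _ := rfl
  map_smul' _ _ := rfl
  left_inv _ := by ext; simp
  right_inv _ := by ext; simp
  norm_map' x := by
    have hsum : ∑ i, ∑ k, ‖x (e (k, i))‖ ^ 2 = ∑ t, ‖x t‖ ^ 2 := by
      rw [← e.sum_comp, Fintype.sum_prod_type_right]
    rw [← sq_eq_sq₀ (norm_nonneg _) (norm_nonneg _), EuclideanSpace.norm_sq_eq, ← hsum,
      PiLp.norm_sq_eq_of_L2]
    exact Finset.sum_congr rfl fun i _ => EuclideanSpace.norm_sq_eq _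

theorem isBlockDiagonal_toEuclideanCLM [DecidableEq o] {e e' : κ × o ≃ τ} {A : Matrix τ τ ℂ}
    {A' : o → Matrix κ κ ℂ} (h : A.submatrix e' e = blockDiagonal A') :
    IsBlockDiagonal (splitting e) (splitting e') (toEuclideanCLM (𝕜 := ℂ) A)
      fun i => toEuclideanCLM (𝕜 := ℂ) (A' i) := by
  intro x i
  ext k
  change (A *ᵥ x) (e' (k, i)) = (A' i *ᵥ fun l => x (e (l, i))) k
  have hentry (l : κ) (p : o) : A (e' (k, i)) (e (l, p)) = if i = p then A' i k l else 0 :=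
    congrFun₂ h (k, i) (l, p)
  simp only [mulVec, dotProduct]
  rw [← e.sum_comp, Fintype.sum_prod_type]
  simp [hentry]

theorem IsEllipticMatrix.of_submatrix_eq_blockDiagonal [DecidableEq o] {e e' : κ × o ≃ τ} {c : ℝ}
    {a b : ι → Matrix τ τ ℂ} {a' b' : o → ι → Matrix κ κ ℂ}
    (h : ∀ i, IsEllipticMatrix c (a' i) (b' i))
    (ha : ∀ j, (a j).submatrix e' e = blockDiagonal fun i => a' i j)
    (hb : ∀ j, (b j).submatrix e' e = blockDiagonal fun i => b' i j) : IsEllipticMatrix c a b :=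
  IsElliptic.of_isBlockDiagonal h (fun j => isBlockDiagonal_toEuclideanCLM (ha j))
    fun j => isBlockDiagonal_toEuclideanCLM (hb j)

theorem symbolIndex_neg (a b : ι → Matrix τ τ ℂ) : symbolIndex (-a) (-b) = symbolIndex a b := by
  have hneg : (fockOperator (fun j => toEuclideanCLM (𝕜 := ℂ) ((-a) j))
      fun j => toEuclideanCLM (𝕜 := ℂ) ((-b) j)) =
      -fockOperator (fun j => toEuclideanCLM (𝕜 := ℂ) (a j))
        fun j => toEuclideanCLM (𝕜 := ℂ) (b j) := by
    rw [← neg_one_smul ℂ (fockOperator _ _), ← fockOperator_smul]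
    congr 1 <;> exact funext fun j => (map_neg _ _).trans (neg_one_smul ℂ _).symm
  rw [symbolIndex, hneg, gradedIndex_neg, symbolIndex]

variable [Nonempty ι]

theorem symbolIndex_eq_sum [DecidableEq o] {e e' : κ × o ≃ τ} {c : ℝ}
    {a b : ι → Matrix τ τ ℂ} {a' b' : o → ι → Matrix κ κ ℂ} (hc : 0 < c)
    (h : ∀ i, IsEllipticMatrix c (a' i) (b' i))
    (ha : ∀ j, (a j).submatrix e' e = blockDiagonal fun i => a' i j)
    (hb : ∀ j, (b j).submatrix e' e = blockDiagonal fun i => b' i j) :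
    symbolIndex a b = ∑ i, symbolIndex (a' i) (b' i) :=
  gradedIndex_fockOperator_eq_sum (fun j => isBlockDiagonal_toEuclideanCLM (ha j))
    (fun j => isBlockDiagonal_toEuclideanCLM (hb j))
    (fun i => ((h i).isUpperSemiFredholm_fockOperator hc).finiteDimensional_ker)
    fun i => ((h i).isUpperSemiFredholm_adjoint_fockOperator hc).finiteDimensional_ker

theorem symbolIndex_eq_of_conjTranspose_mul_add_eq_zero {c : ℝ} {a b a' b' : ι → Matrix τ τ ℂ}
    (hc : 0 < c) (h : IsEllipticMatrix c a b) (h' : IsEllipticMatrix c a' b')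
    (horth : ∀ z, (symbol a b z)ᴴ * symbol a' b' z + (symbol a' b' z)ᴴ * symbol a b z = 0) :
    symbolIndex a b = symbolIndex a' b' := by
  refine gradedIndex_fockOperator_eq_of_orthogonal hc h h' fun z x => ?_
  have hzero := congrArg (toEuclideanCLM (𝕜 := ℂ)) (horth z)
  simp only [map_add, map_mul, map_zero, ← star_eq_conjTranspose, map_star, map_symbol] at hzero
  set S := symbol (fun j => toEuclideanCLM (𝕜 := ℂ) (a j))
    (fun j => toEuclideanCLM (𝕜 := ℂ) (b j)) z
  set S' := symbol (fun j => toEuclideanCLM (𝕜 := ℂ) (a' j))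
    (fun j => toEuclideanCLM (𝕜 := ℂ) (b' j)) z
  have hinner : ⟪S x, S' x⟫_ℂ + ⟪S' x, S x⟫_ℂ = 0 := by
    have := congrArg (fun A => ⟪x, A x⟫_ℂ) hzero
    simpa [star_eq_adjoint, inner_add_right, adjoint_inner_right] using this
  rw [← inner_conj_symm (S' x), Complex.add_conj] at hinner
  exact_mod_cast (mul_eq_zero.1 (Complex.ofReal_eq_zero.1 hinner)).resolve_left two_ne_zero

theorem symbolIndex_conjTranspose {c : ℝ} {a b : ι → Matrix τ τ ℂ} {C : Matrix τ τ ℂ} (hc : 0 < c)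
    (h : ∀ s : ℝ, IsElliptic c s (fun j => toEuclideanCLM (𝕜 := ℂ) (a j))
      (fun j => toEuclideanCLM (𝕜 := ℂ) (b j)) ((s : ℂ) • toEuclideanCLM (𝕜 := ℂ) C)) :
    symbolIndex (fun j => (b j)ᴴ) (fun j => (a j)ᴴ) = symbolIndex a b := by
  have hzero : IsEllipticMatrix c a b := by
    have hzero := h 0
    rwa [Complex.ofReal_zero, zero_smul ℂ (toEuclideanCLM (𝕜 := ℂ) C)] at hzero
  have hindex := (isOdd_fockOperator _ _).index_eq (hzero.isUpperSemiFredholm_fockOperator hc)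
    (hzero.isUpperSemiFredholm_adjoint_fockOperator hc)
  rw [index_fockOperator_eq_zero hc h, adjoint_fockOperator] at hindex
  simp only [← star_eq_adjoint, ← map_star] at hindex
  exact (sub_eq_zero.1 hindex.symm).symm

end Index

end MatrixSymbols

section Comparison

open ContinuousLinearMap Module
open scoped InnerProductSpace Kronecker

variable {ι κ Λ : Type*}

theorem conjTranspose_symbol_conjTranspose [Fintype ι] (e : ι → Matrix Λ Λ ℂ) (z : ι → ℂ) :
    (symbol e (fun j => (e j)ᴴ) z)ᴴ = symbol e (fun j => (e j)ᴴ) z := by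
  simpa only [star_eq_conjTranspose, conjTranspose_conjTranspose]
    using star_symbol e (fun j => (e j)ᴴ) z

section Doubled

variable [DecidableEq Λ]

/-- The coefficients `a_j ⊗ 1 ⊕ -(b_j)ᴴ ⊗ 1` of the symbol `S ⊗ 1 ⊕ -Sᴴ ⊗ 1` on two copies of
`ℂ^κ ⊗ ℂ^Λ`, where `S = symbol a b`. -/
def doubled (Λ : Type*) [DecidableEq Λ] (a b : ι → Matrix κ κ ℂ) (j : ι) :
    Matrix (κ × Λ ⊕ κ × Λ) (κ × Λ ⊕ κ × Λ) ℂ :=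
  fromBlocks (a j ⊗ₖ 1) 0 0 (-((b j)ᴴ ⊗ₖ 1))

theorem doubled_submatrix (a b : ι → Matrix κ κ ℂ) (j : ι) :
    (doubled Λ a b j).submatrix (Equiv.prodSumDistrib κ Λ Λ) (Equiv.prodSumDistrib κ Λ Λ) =
      blockDiagonal fun i : Λ ⊕ Λ => Sum.elim (fun _ => a) (fun _ => -fun j => (b j)ᴴ) i j := by
  ext ⟨k, p | p⟩ ⟨l, q | q⟩ <;> obtain rfl | hpq := eq_or_ne p q <;>
    simp [doubled, blockDiagonal_apply, *]

theorem symbol_doubled [Fintype ι] (a b : ι → Matrix κ κ ℂ) (z : ι → ℂ) :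
    symbol (doubled Λ a b) (doubled Λ b a) z =
      fromBlocks (symbol a b z ⊗ₖ 1) 0 0 (-((symbol a b z)ᴴ ⊗ₖ 1)) := by
  rw [← star_eq_conjTranspose, star_symbol]
  ext (p | p) (q | q) <;>
    simp [symbol, doubled, Matrix.sum_apply, Finset.sum_mul, add_mul, mul_assoc,
      star_eq_conjTranspose, Finset.sum_neg_distrib, -neg_add_rev, ← neg_add]

end Doubled

variable [DecidableEq κ]

/-- The coefficients of the off-diagonal symbol on two copies of `ℂ^κ ⊗ ℂ^Λ` whose blocks are
`1 ⊗ symbol e f`. -/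
def offDiagonal (κ : Type*) [DecidableEq κ] (e : ι → Matrix Λ Λ ℂ) (j : ι) :
    Matrix (κ × Λ ⊕ κ × Λ) (κ × Λ ⊕ κ × Λ) ℂ :=
  fromBlocks 0 (1 ⊗ₖ e j) (1 ⊗ₖ e j) 0

theorem offDiagonal_submatrix (e : ι → Matrix Λ Λ ℂ) (j : ι) :
    (offDiagonal κ e j).submatrix
        (((Equiv.prodSumDistrib Λ κ κ).trans
          (.sumCongr (.prodComm Λ κ) (.prodComm Λ κ))).trans (.sumComm _ _))
        ((Equiv.prodSumDistrib Λ κ κ).trans (.sumCongr (.prodComm Λ κ) (.prodComm Λ κ))) =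
      blockDiagonal fun _ => e j := by
  ext ⟨k, p | p⟩ ⟨l, q | q⟩ <;>
    simp [offDiagonal, blockDiagonal_apply, Matrix.one_apply]

theorem symbol_offDiagonal [Fintype ι] (e f : ι → Matrix Λ Λ ℂ) (z : ι → ℂ) :
    symbol (offDiagonal κ e) (offDiagonal κ f) z =
      fromBlocks 0 (1 ⊗ₖ symbol e f z) (1 ⊗ₖ symbol e f z) 0 := by
  ext (p | p) (q | q) <;>
    simp [symbol, offDiagonal, Matrix.sum_apply, Finset.mul_sum, mul_add, mul_left_comm]

variable [Fintype ι] [DecidableEq Λ] [Fintype κ] [Fintype Λ]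

theorem conjTranspose_doubled_mul_offDiagonal_add (a b : ι → Matrix κ κ ℂ) (e : ι → Matrix Λ Λ ℂ)
    (z : ι → ℂ) :
    (symbol (doubled Λ a b) (doubled Λ b a) z)ᴴ *
        symbol (offDiagonal κ e) (offDiagonal κ fun j => (e j)ᴴ) z +
      (symbol (offDiagonal κ e) (offDiagonal κ fun j => (e j)ᴴ) z)ᴴ *
        symbol (doubled Λ a b) (doubled Λ b a) z = 0 := by
  simp only [symbol_doubled, symbol_offDiagonal, fromBlocks_conjTranspose, conjTranspose_neg,
    conjTranspose_kronecker, conjTranspose_zero, conjTranspose_one, conjTranspose_conjTranspose,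
    conjTranspose_symbol_conjTranspose, fromBlocks_multiply, fromBlocks_add, ← mul_kronecker_mul,
    neg_mul, mul_neg, zero_mul, mul_zero, one_mul, mul_one, add_zero, zero_add, neg_zero,
    add_neg_cancel, neg_add_cancel, fromBlocks_zero]

theorem IsEllipticMatrix.neg {c : ℝ} {a b : ι → Matrix κ κ ℂ} (h : IsEllipticMatrix c a b) :
    IsEllipticMatrix c (-a) (-b) := by
  intro z x
  have hneg : symbol (fun j => toEuclideanCLM (𝕜 := ℂ) ((-a) j))
        (fun j => toEuclideanCLM (𝕜 := ℂ) ((-b) j)) z =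
      -symbol (fun j => toEuclideanCLM (𝕜 := ℂ) (a j))
        (fun j => toEuclideanCLM (𝕜 := ℂ) (b j)) z := by
    simp only [symbol, Pi.neg_apply, map_neg, smul_neg, ← neg_add, Finset.sum_neg_distrib]
  have hx := h z x
  rw [add_zero] at hx ⊢
  rwa [hneg, _root_.neg_apply, norm_neg]

theorem IsEllipticMatrix.conjTranspose {c : ℝ} {a b : ι → Matrix κ κ ℂ}
    (h : IsEllipticMatrix c a b) : IsEllipticMatrix c (fun j => (b j)ᴴ) fun j => (a j)ᴴ := by
  have hadjoint := h.adjoint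
  simp only [← star_eq_adjoint, ← map_star, star_zero] at hadjoint
  exact hadjoint

theorem IsEllipticMatrix.mono {c c' : ℝ} {a b : ι → Matrix κ κ ℂ} (h : IsEllipticMatrix c a b)
    (hc' : 0 ≤ c') (hle : c' ≤ c) : IsEllipticMatrix c' a b := fun z x =>
  (h z x).trans' (by gcongr)

theorem IsCAR.isEllipticMatrix [DecidableEq ι] {e : ι → Matrix Λ Λ ℂ} (he : IsCAR e) :
    IsEllipticMatrix 1 e fun j => (e j)ᴴ := by
  have h := (he.map (toEuclideanCLM (𝕜 := ℂ))).isElliptic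
  simp only [← star_eq_adjoint, ← map_star] at h
  exact h

theorem symbolIndex_of_isCAR [DecidableEq ι] {e : ι → Matrix Λ Λ ℂ} (he : IsCAR e) :
    symbolIndex e (fun j => (e j)ᴴ) = finrank ℂ (vacuum e) := by
  have h := (he.map (toEuclideanCLM (𝕜 := ℂ))).gradedIndex_fockOperator
  simp only [← star_eq_adjoint, ← map_star] at h
  refine h.trans ?_
  have hvacuum : (vacuum e) = (⨅ j, (toEuclideanCLM (𝕜 := ℂ) (e j)).ker).map
      (WithLp.linearEquiv 2 ℂ (Λ → ℂ)).toLinearMap := by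
    ext v
    simp [vacuum]
  rw [hvacuum, LinearEquiv.finrank_map_eq]

section Index

variable {a b : ι → Matrix κ κ ℂ} {c : ℝ}

theorem IsEllipticMatrix.sumElim_neg_conjTranspose {o : Type*} (h : IsEllipticMatrix c a b)
    (i : o ⊕ o) :
    IsEllipticMatrix c (Sum.elim (fun _ : o => a) (fun _ : o => -fun j => (b j)ᴴ) i)
      (Sum.elim (fun _ : o => b) (fun _ : o => -fun j => (a j)ᴴ) i) := by
  obtain _ | _ := i
  exacts [h, h.conjTranspose.neg]

theorem IsEllipticMatrix.doubled (h : IsEllipticMatrix c a b) :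
    IsEllipticMatrix c (doubled Λ a b) (doubled Λ b a) :=
  .of_submatrix_eq_blockDiagonal h.sumElim_neg_conjTranspose (doubled_submatrix a b)
    (doubled_submatrix b a)

theorem IsCAR.isEllipticMatrix_offDiagonal [DecidableEq ι] {e : ι → Matrix Λ Λ ℂ} (he : IsCAR e) :
    IsEllipticMatrix 1 (offDiagonal κ e) (offDiagonal κ fun j => (e j)ᴴ) :=
  .of_submatrix_eq_blockDiagonal (fun _ => he.isEllipticMatrix) (offDiagonal_submatrix e)
    (offDiagonal_submatrix _)

variable [Nonempty ι]

theorem symbolIndex_doubled (hc : 0 < c) (h : IsEllipticMatrix c a b) :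
    symbolIndex (doubled Λ a b) (doubled Λ b a) =
      Fintype.card Λ * (symbolIndex a b + symbolIndex (fun j => (b j)ᴴ) fun j => (a j)ᴴ) := by
  rw [symbolIndex_eq_sum hc h.sumElim_neg_conjTranspose (doubled_submatrix a b)
    (doubled_submatrix b a)]
  simp only [Fintype.sum_sum_type, Sum.elim_inl, Sum.elim_inr, symbolIndex_neg, Finset.sum_const,
    Finset.card_univ, nsmul_eq_mul, mul_add]

theorem symbolIndex_offDiagonal [DecidableEq ι] {e : ι → Matrix Λ Λ ℂ} (he : IsCAR e) :
    symbolIndex (offDiagonal κ e) (offDiagonal κ fun j => (e j)ᴴ) =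
      2 * Fintype.card κ * finrank ℂ (vacuum e) := by
  rw [symbolIndex_eq_sum one_pos (fun _ => he.isEllipticMatrix) (offDiagonal_submatrix e)
    (offDiagonal_submatrix _)]
  simp [symbolIndex_of_isCAR he, ← two_mul]

theorem card_mul_symbolIndex_add [DecidableEq ι] (hc : 0 < c) (h : IsEllipticMatrix c a b)
    {e : ι → Matrix Λ Λ ℂ} (he : IsCAR e) :
    Fintype.card Λ * (symbolIndex a b + symbolIndex (fun j => (b j)ᴴ) fun j => (a j)ᴴ) =
      2 * Fintype.card κ * finrank ℂ (vacuum e) := by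
  rw [← symbolIndex_doubled hc h, ← symbolIndex_offDiagonal he]
  have hmin : 0 < min c 1 := lt_min hc one_pos
  exact symbolIndex_eq_of_conjTranspose_mul_add_eq_zero hmin
    (h.doubled.mono hmin.le (min_le_left _ _))
    (he.isEllipticMatrix_offDiagonal.mono hmin.le (min_le_right _ _))
    (conjTranspose_doubled_mul_offDiagonal_add a b e)

end Index

end Comparison

section RealLinearMaps

open Module
open scoped ComplexConjugate

theorem exists_pos_mul_norm_le_norm_apply {W V : Type*} [NormedAddCommGroup W] [NormedSpace ℝ W]
    [FiniteDimensional ℝ W] [NormedAddCommGroup V] [NormedSpace ℂ V] [FiniteDimensional ℂ V]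
    (B : W →ₗ[ℝ] V →L[ℂ] V) (hB : ∀ w ≠ 0, Function.Injective (B w)) :
    ∃ c > 0, ∀ w x, c * (‖w‖ * ‖x‖) ≤ ‖B w x‖ := by
  have := FiniteDimensional.proper_real W
  have := FiniteDimensional.proper ℂ V
  have hcont : Continuous fun p : W × V => ‖B p.1 p.2‖ :=
    ((B.continuous_of_finiteDimensional.comp continuous_fst).clm_apply continuous_snd).norm
  have hpos (p : W × V) (hp : p ∈ Metric.sphere 0 1 ×ˢ Metric.sphere 0 1) : 0 < ‖B p.1 p.2‖ := by
    have hw : p.1 ≠ 0 := ne_zero_of_mem_unit_sphere ⟨p.1, hp.1⟩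
    have hx : p.2 ≠ 0 := ne_zero_of_mem_unit_sphere ⟨p.2, hp.2⟩
    exact norm_pos_iff.2 ((map_ne_zero_iff _ (hB _ hw)).2 hx)
  obtain ⟨c, hc, hle⟩ := ((isCompact_sphere (0 : W) 1).prod
    (isCompact_sphere (0 : V) 1)).exists_forall_le' hcont.continuousOn hpos
  refine ⟨c, hc, fun w x => ?_⟩
  obtain rfl | hw := eq_or_ne w 0
  · simp
  obtain rfl | hx := eq_or_ne x 0
  · simp
  have hunit := hle (‖w‖⁻¹ • w, (‖x‖⁻¹ : ℂ) • x)
    ⟨by simp [norm_smul, hw], by simp [norm_smul, hx]⟩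
  simp only [map_smul, _root_.smul_apply, norm_smul, norm_inv, norm_norm,
    Complex.norm_real] at hunit
  rwa [inv_mul_eq_div, inv_mul_eq_div, div_div, le_div_iff₀ (by positivity)] at hunit

theorem exists_eq_symbol {ι M : Type*} [Fintype ι] [AddCommGroup M] [Module ℂ M]
    [Module ℝ M] [IsScalarTower ℝ ℂ M] (B : (ι → ℂ) →ₗ[ℝ] M) :
    ∃ a b : ι → M, ∀ z, B z = symbol a b z := by
  classical
  refine ⟨fun j => (2⁻¹ : ℂ) • (B (Pi.single j 1) - Complex.I • B (Pi.single j Complex.I)),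
    fun j => (2⁻¹ : ℂ) • (B (Pi.single j 1) + Complex.I • B (Pi.single j Complex.I)), fun z => ?_⟩
  have hofReal (r : ℝ) (x : M) : (r : ℂ) • x = r • x := algebraMap_smul ℂ r x
  have hsingle (j : ι) (w : ℂ) : B (Pi.single j w) =
      (w.re : ℂ) • B (Pi.single j 1) + (w.im : ℂ) • B (Pi.single j Complex.I) := by
    rw [hofReal, hofReal, ← map_smul, ← map_smul, ← map_add, ← Pi.single_smul,
      ← Pi.single_smul, ← Pi.single_add]
    congr 2
    simp
  conv_lhs => rw [← Finset.univ_sum_single z, map_sum]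
  refine Finset.sum_congr rfl fun j _ => ?_
  have hre : (z j).re = 2⁻¹ * (z j + conj (z j)) := by
    rw [Complex.add_conj, Complex.ofReal_mul, Complex.ofReal_ofNat]
    ring
  have him : (z j).im = -Complex.I * 2⁻¹ * (z j - conj (z j)) := by
    rw [Complex.sub_conj, Complex.ofReal_mul, Complex.ofReal_ofNat]
    linear_combination ((z j).im : ℂ) * Complex.I_sq
  rw [hsingle, hre, him]
  module

theorem exists_eq_symbol_add_smul {ι M : Type*} [Fintype ι] [AddCommGroup M] [Module ℂ M]
    [Module ℝ M] [IsScalarTower ℝ ℂ M] (B : WithLp 2 (EuclideanSpace ℂ ι × ℝ) →ₗ[ℝ] M) :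
    ∃ (a b : ι → M) (C : M), ∀ z (s : ℝ),
      B (WithLp.toLp 2 (WithLp.toLp 2 z, s)) = symbol a b z + (s : ℂ) • C := by
  let inl : (ι → ℂ) →ₗ[ℝ] WithLp 2 (EuclideanSpace ℂ ι × ℝ) :=
    (WithLp.linearEquiv 2 ℝ _).symm.toLinearMap ∘ₗ LinearMap.inl ℝ _ ℝ ∘ₗ
      (WithLp.linearEquiv 2 ℝ (ι → ℂ)).symm.toLinearMap
  obtain ⟨a, b, hab⟩ := exists_eq_symbol (B ∘ₗ inl)
  refine ⟨a, b, B (WithLp.toLp 2 (0, 1)), fun z s => ?_⟩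
  have hadd : (WithLp.toLp 2 (WithLp.toLp 2 z, s) : WithLp 2 (EuclideanSpace ℂ ι × ℝ)) =
      inl z + s • WithLp.toLp 2 (0, 1) := WithLp.ofLp_injective 2 (by simp [inl])
  rw [hadd, map_add, map_smul, ← hab]
  exact congrArg _ (algebraMap_smul ℂ s _).symm

theorem exists_linearIsometry_of_finrank_le {E F : Type*} [NormedAddCommGroup E]
    [InnerProductSpace ℝ E] [FiniteDimensional ℝ E] [NormedAddCommGroup F] [InnerProductSpace ℝ F]
    [FiniteDimensional ℝ F] (h : finrank ℝ E ≤ finrank ℝ F) : Nonempty (E →ₗᵢ[ℝ] F) := by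
  have hE := (stdOrthonormalBasis ℝ E).orthonormal
  rw [← (stdOrthonormalBasis ℝ E).coe_toBasis] at hE
  have hF := (stdOrthonormalBasis ℝ F).orthonormal.comp _ (Fin.castLE_injective h)
  refine ⟨((stdOrthonormalBasis ℝ E).toBasis.constr ℝ
    (stdOrthonormalBasis ℝ F ∘ Fin.castLE h)).isometryOfOrthonormal hE ?_⟩
  convert hF
  exact funext fun i => Basis.constr_basis _ _ _ _

end RealLinearMaps

section LowerBound

open Module ContinuousLinearMap

variable {m : ℕ} {κ : Type*} [Fintype κ] [DecidableEq κ]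

theorem exists_isElliptic (B : WithLp 2 (EuclideanSpace ℂ (Fin m) × ℝ) →ₗ[ℝ] Matrix κ κ ℂ)
    (hB : ∀ v ≠ 0, IsUnit (B v)) :
    ∃ c > 0, ∃ (a b : Fin m → Matrix κ κ ℂ) (C : Matrix κ κ ℂ), ∀ s : ℝ,
      IsElliptic c s (fun j => toEuclideanCLM (𝕜 := ℂ) (a j))
        (fun j => toEuclideanCLM (𝕜 := ℂ) (b j)) ((s : ℂ) • toEuclideanCLM (𝕜 := ℂ) C) := by
  let T : Matrix κ κ ℂ →ₗ[ℝ] EuclideanSpace ℂ κ →L[ℂ] EuclideanSpace ℂ κ :=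
    (toEuclideanCLM (𝕜 := ℂ) (n := κ)).toAlgEquiv.toLinearMap.restrictScalars ℝ
  obtain ⟨c, hc, hle⟩ := exists_pos_mul_norm_le_norm_apply (T ∘ₗ B) fun w hw =>
    (isUnit_iff_bijective.1 ((hB w hw).map (toEuclideanCLM (𝕜 := ℂ)))).1
  obtain ⟨a, b, C, hB_eq⟩ := exists_eq_symbol_add_smul B
  refine ⟨c, hc, a, b, C, fun s z x => ?_⟩
  have hsymbol : symbol (fun j => toEuclideanCLM (𝕜 := ℂ) (a j))
      (fun j => toEuclideanCLM (𝕜 := ℂ) (b j)) z + (s : ℂ) • toEuclideanCLM (𝕜 := ℂ) C =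
      toEuclideanCLM (𝕜 := ℂ) (B (WithLp.toLp 2 (WithLp.toLp 2 z, s))) := by
    rw [hB_eq, map_add, map_symbol]
    exact congrArg _ (map_smul _ _ _).symm
  have hx := pow_le_pow_left₀ (by positivity) (hle (WithLp.toLp 2 (WithLp.toLp 2 z, s)) x) 2
  rw [hsymbol]
  refine hx.trans_eq' ?_
  rw [mul_pow, mul_pow, WithLp.prod_norm_sq_eq_of_L2, EuclideanSpace.norm_sq_eq]
  simp

theorem two_pow_dvd_card [NeZero m]
    (B : WithLp 2 (EuclideanSpace ℂ (Fin m) × ℝ) →ₗ[ℝ] Matrix κ κ ℂ)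
    (hB : ∀ v ≠ 0, IsUnit (B v)) : 2 ^ m ∣ Fintype.card κ := by
  obtain ⟨c, hc, a, b, C, h⟩ := exists_isElliptic B hB
  obtain ⟨Λ, _, _, e, -, hcard, he, -, hvacuum⟩ := exists_isCAR m
  have hzero : IsEllipticMatrix c a b := by
    have hzero := h 0
    rwa [Complex.ofReal_zero, zero_smul ℂ (toEuclideanCLM (𝕜 := ℂ) C)] at hzero
  have hindex := card_mul_symbolIndex_add hc hzero he
  rw [symbolIndex_conjTranspose hc h, hcard, hvacuum] at hindex
  refine Int.natCast_dvd_natCast.1 ⟨symbolIndex a b, ?_⟩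
  push_cast at hindex ⊢
  linarith

end LowerBound

section Construction

open Module
open scoped Kronecker

/-- An isometric family is a real-linear family of complex matrices, each of which scales Euclidean
norms by the norm of its parameter. -/
def IsIsometricFamily {E κ : Type*} [NormedAddCommGroup E] [NormedSpace ℝ E] [Fintype κ]
    [DecidableEq κ] (B : E →ₗ[ℝ] Matrix κ κ ℂ) : Prop :=
  ∀ v, (B v)ᴴ * B v = (‖v‖ ^ 2 : ℝ) • (1 : Matrix κ κ ℂ)

namespace IsIsometricFamily

variable {E κ : Type*} [NormedAddCommGroup E] [NormedSpace ℝ E] [Fintype κ] [DecidableEq κ]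
  {B : E →ₗ[ℝ] Matrix κ κ ℂ}

theorem isUnit (hB : IsIsometricFamily B) {v : E} (hv : v ≠ 0) : IsUnit (B v) := by
  have hleft : ((‖v‖ ^ 2)⁻¹ : ℝ) • (B v)ᴴ * B v = 1 := by
    rw [smul_mul_assoc, hB, smul_smul, inv_mul_cancel₀ (by positivity), one_smul]
  exact IsUnit.of_mul_eq_one_right _ hleft

theorem comp_linearIsometry {F : Type*} [NormedAddCommGroup F] [NormedSpace ℝ F]
    (hB : IsIsometricFamily B) (f : F →ₗᵢ[ℝ] E) : IsIsometricFamily (B ∘ₗ f.toLinearMap) :=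
  fun v => by simpa using hB (f v)

theorem kronecker_one {o : Type*} [Fintype o] [DecidableEq o] (hB : IsIsometricFamily B) :
    IsIsometricFamily
      ((kroneckerBilinear (R := ℝ) (n := o) (p := o)).flip 1 ∘ₗ B) := fun v => by
  change (B v ⊗ₖ 1)ᴴ * (B v ⊗ₖ 1) = _
  rw [conjTranspose_kronecker, ← mul_kronecker_mul, hB, conjTranspose_one, one_mul, smul_kronecker,
    one_kronecker_one]

theorem reindex {o : Type*} [Fintype o] [DecidableEq o] (hB : IsIsometricFamily B) (e : κ ≃ o) :
    IsIsometricFamily ((reindexAlgEquiv ℝ ℂ e).toLinearMap ∘ₗ B) := fun v => by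
  change (Matrix.reindex e e (B v))ᴴ * Matrix.reindex e e (B v) = _
  rw [conjTranspose_reindex, ← coe_reindexAlgEquiv ℝ, ← map_mul, hB, map_smul, map_one]

end IsIsometricFamily

variable {ι Λ : Type*} [Fintype ι] [Fintype Λ] [DecidableEq Λ] {e : ι → Matrix Λ Λ ℂ}
  {ε : Matrix Λ Λ ℂ}

theorem IsGrading.mul_symbol_add (hε : IsGrading ε e) (z : ι → ℂ) :
    ε * symbol e (fun j => (e j)ᴴ) z + symbol e (fun j => (e j)ᴴ) z * ε = 0 := by
  have hstar (j : ι) : ε * (e j)ᴴ + (e j)ᴴ * ε = 0 := by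
    simpa [hε.conjTranspose_eq, add_comm] using congrArg Matrix.conjTranspose (hε.mul_add_mul j)
  simp only [symbol, Finset.mul_sum, Finset.sum_mul, ← Finset.sum_add_distrib]
  refine Finset.sum_eq_zero fun j _ => ?_
  calc
    _ = z j • (ε * e j + e j * ε) + starRingEnd ℂ (z j) • (ε * (e j)ᴴ + (e j)ᴴ * ε) := by
      simp only [mul_add, add_mul, mul_smul_comm, smul_mul_assoc]
      module
    _ = 0 := by rw [hε.mul_add_mul, hstar, smul_zero, smul_zero, add_zero]

/-- The family `(z, w) ↦ ∑ j, (z_j e_j + z̄_j e_jᴴ) + re w • ε + i im w • 1`, with two real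
parameters more than the Clifford module given by `e`. -/
noncomputable def cliffordFamily (e : ι → Matrix Λ Λ ℂ) (ε : Matrix Λ Λ ℂ) :
    WithLp 2 (EuclideanSpace ℂ ι × ℂ) →ₗ[ℝ] Matrix Λ Λ ℂ where
  toFun v := symbol e (fun j => (e j)ᴴ) v.fst + v.snd.re • ε + (v.snd.im * Complex.I) • 1
  map_add' v w := by
    simp [symbol, Finset.sum_add_distrib, add_smul, add_mul]
    abel
  map_smul' r v := by
    simp [symbol, Finset.smul_sum, mul_smul, Complex.coe_smul]

theorem isIsometricFamily_cliffordFamily [DecidableEq ι] (he : IsCAR e) (hε : IsGrading ε e) :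
    IsIsometricFamily (cliffordFamily e ε) := by
  intro v
  set D := symbol e (fun j => (e j)ᴴ) v.fst with hD
  set A := D + v.snd.re • ε with hA
  have hA_star : Aᴴ = A := by
    simp [hA, hD, conjTranspose_symbol_conjTranspose, hε.conjTranspose_eq]
  have hD_sq : D * D = (∑ j, ‖v.fst j‖ ^ 2 : ℝ) • 1 := he.symbol_mul_self _
  have hA_sq : A * A = (∑ j, ‖v.fst j‖ ^ 2 + v.snd.re ^ 2 : ℝ) • 1 := by
    calc A * A = D * D + v.snd.re • (ε * D + D * ε) + (v.snd.re ^ 2) • (ε * ε) := by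
          simp only [hA, mul_add, add_mul, mul_smul_comm, smul_mul_assoc]
          module
      _ = _ := by rw [hD_sq, hε.mul_symbol_add, hε.mul_self, smul_zero, add_zero, add_smul]
  have hnorm : ‖v‖ ^ 2 = ∑ j, ‖v.fst j‖ ^ 2 + v.snd.re ^ 2 + v.snd.im ^ 2 := by
    rw [WithLp.prod_norm_sq_eq_of_L2, EuclideanSpace.norm_sq_eq, Complex.sq_norm,
      Complex.normSq_apply]
    ring
  have hI : (v.snd.im * Complex.I) * (v.snd.im * Complex.I) = -((v.snd.im ^ 2 : ℝ) : ℂ) := by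
    push_cast
    linear_combination (v.snd.im : ℂ) ^ 2 * Complex.I_sq
  calc (cliffordFamily e ε v)ᴴ * cliffordFamily e ε v
      = (A - (v.snd.im * Complex.I) • 1) * (A + (v.snd.im * Complex.I) • 1) := by
        congr 1
        change (A + _)ᴴ = _
        simp [hA_star, sub_eq_add_neg]
    _ = A * A - ((v.snd.im * Complex.I) * (v.snd.im * Complex.I)) • 1 := by
        simp only [mul_add, sub_mul, mul_smul_comm, smul_mul_assoc, mul_one, one_mul]
        module
    _ = (‖v‖ ^ 2 : ℝ) • 1 := by
        rw [hA_sq, hI, hnorm, neg_smul, sub_neg_eq_add, Complex.coe_smul, add_smul _ (v.snd.im ^ 2)]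

theorem finrank_real_withLp_prod_complex (ν : ℕ) :
    finrank ℝ (WithLp 2 (EuclideanSpace ℂ (Fin ν) × ℂ)) = 2 * ν + 2 := by
  rw [(WithLp.linearEquiv 2 ℝ _).finrank_eq, finrank_prod, Complex.finrank_real_complex,
    finrank_real_of_complex, finrank_euclideanSpace_fin]

theorem exists_isIsometricFamily {N n ν : ℕ} (hN : 2 ^ ν ∣ N) (hn : n ≤ 2 * ν + 2) :
    ∃ B : EuclideanSpace ℝ (Fin n) →ₗ[ℝ] Matrix (Fin N) (Fin N) ℂ, IsIsometricFamily B := by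
  obtain ⟨Λ, _, _, e, ε, hcard, he, hε, -⟩ := exists_isCAR ν
  obtain ⟨q, rfl⟩ := hN
  have hfinrank : finrank ℝ (EuclideanSpace ℝ (Fin n)) ≤
      finrank ℝ (WithLp 2 (EuclideanSpace ℂ (Fin ν) × ℂ)) := by
    rwa [finrank_euclideanSpace_fin, finrank_real_withLp_prod_complex]
  obtain ⟨f⟩ := exists_linearIsometry_of_finrank_le hfinrank
  let g : Λ × Fin q ≃ Fin (2 ^ ν * q) := Fintype.equivFinOfCardEq (by simp [hcard])
  have hB := (isIsometricFamily_cliffordFamily he hε).comp_linearIsometry f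
  exact ⟨_, IsIsometricFamily.reindex (IsIsometricFamily.kronecker_one hB) g⟩

end Construction

section Bound

open Module

theorem le_two_mul_padicValNat_add_two {N n : ℕ} (hN : N ≠ 0)
    (B : EuclideanSpace ℝ (Fin n) →ₗ[ℝ] Matrix (Fin N) (Fin N) ℂ)
    (hB : ∀ v, v ≠ 0 → IsUnit (B v)) : n ≤ 2 * padicValNat 2 N + 2 := by
  by_contra! hn
  let E := WithLp 2 (EuclideanSpace ℂ (Fin (padicValNat 2 N + 1)) × ℝ)
  have hfinrank : finrank ℝ E ≤ finrank ℝ (EuclideanSpace ℝ (Fin n)) := by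
    rw [(WithLp.linearEquiv 2 ℝ _).finrank_eq, finrank_prod, finrank_real_of_complex,
      finrank_euclideanSpace_fin, finrank_euclideanSpace_fin, finrank_self]
    lia
  obtain ⟨f⟩ := exists_linearIsometry_of_finrank_le hfinrank
  have hdvd := two_pow_dvd_card (B ∘ₗ f.toLinearMap) fun v hv =>
    hB _ ((map_ne_zero_iff f f.injective).2 hv)
  rw [Fintype.card_fin] at hdvd
  exact pow_succ_padicValNat_not_dvd hN hdvd

end Bound

end HurwitzRadon

/-- Entry `𝔤 = 𝔰𝔲(N,N)` of the Hurwitz–Radon value theorem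
(via the `𝔭`-part of block matrices `[[0,B],[Bᴴ,0]]`):
`ρ⁽¹⁾ = ρ⁽²⁾ = 2·ord₂(N) + 2`, the Adams–Lax–Phillips number `ℂ(N)`. -/
theorem hurwitzRadon_su_N_N (N : ℕ) (hN : 1 ≤ N) (n : ℕ) :
    ((∃ B : EuclideanSpace ℝ (Fin n) →ₗ[ℝ] Matrix (Fin N) (Fin N) ℂ,
        ∀ v, (B v)ᴴ * B v = (‖v‖ ^ 2 : ℝ) • (1 : Matrix (Fin N) (Fin N) ℂ)) ↔
      (∃ B : EuclideanSpace ℝ (Fin n) →ₗ[ℝ] Matrix (Fin N) (Fin N) ℂ,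
        ∀ v, v ≠ 0 → IsUnit (B v))) ∧
    ((∃ B : EuclideanSpace ℝ (Fin n) →ₗ[ℝ] Matrix (Fin N) (Fin N) ℂ,
        ∀ v, v ≠ 0 → IsUnit (B v)) ↔
      n ≤ 2 * padicValNat 2 N + 2) := by
  have isUnit_of_isometric : (∃ B : EuclideanSpace ℝ (Fin n) →ₗ[ℝ] Matrix (Fin N) (Fin N) ℂ,
      ∀ v, (B v)ᴴ * B v = (‖v‖ ^ 2 : ℝ) • (1 : Matrix (Fin N) (Fin N) ℂ)) →
      ∃ B : EuclideanSpace ℝ (Fin n) →ₗ[ℝ] Matrix (Fin N) (Fin N) ℂ,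
        ∀ v, v ≠ 0 → IsUnit (B v) := fun ⟨B, hB⟩ =>
    ⟨B, fun _ hv => HurwitzRadon.IsIsometricFamily.isUnit hB hv⟩
  have le_of_isUnit : (∃ B : EuclideanSpace ℝ (Fin n) →ₗ[ℝ] Matrix (Fin N) (Fin N) ℂ,
      ∀ v, v ≠ 0 → IsUnit (B v)) → n ≤ 2 * padicValNat 2 N + 2 := fun ⟨B, hB⟩ =>
    HurwitzRadon.le_two_mul_padicValNat_add_two (Nat.one_le_iff_ne_zero.1 hN) B hB
  have isometric_of_le := HurwitzRadon.exists_isIsometricFamily (n := n)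
    (pow_padicValNat_dvd (p := 2) (n := N))
  exact ⟨⟨isUnit_of_isometric, fun h => isometric_of_le (le_of_isUnit h)⟩, le_of_isUnit,
    fun h => isUnit_of_isometric (isometric_of_le h)⟩
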